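/- arXiv:1907.00925 — 3 statements merged into one kernel-verified Lean document; each statement's English description precedes it below -/
import Mathlib

section
/- Schottky's theorem in the ball: for every M > 0 and r ∈ (0,1) there exists a constant C = C(M, r) > 0 such that every holomorphic function f on the unit ball B(0,1) ⊂ ℂⁿ omitting the values 0 and 1 and satisfying |f(0)| ≤ M satisfies |f(z)| ≤ C for all z with |z| ≤ r. -/
open Filter Topology

abbrev Cn (n : ℕ) := EuclideanSpace ℂ (Fin n)

/-- Chordal (spherical) distance between two finite points of the Riemann sphere. -/
noncomputable def chordal (a b : ℂ) : ℝ :=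
  dist a b / (Real.sqrt (1 + ‖a‖^2) * Real.sqrt (1 + ‖b‖^2))

/-- Chordal distance between a finite point and ∞. -/
noncomputable def chordalInf (a : ℂ) : ℝ := 1 / Real.sqrt (1 + ‖a‖^2)

/-- Spherical derivative of a holomorphic function of several complex variables. -/
noncomputable def sphDeriv {E : Type} [NormedAddCommGroup E] [NormedSpace ℂ E]
    (f : E → ℂ) (z : E) : ℝ := ‖fderiv ℂ f z‖ / (1 + ‖f z‖^2)

/-- A family `F` of (holomorphic) functions is normal on `Ω`: every sequence from `F`
has a subsequence which converges uniformly on compact subsets of `Ω` in the spherical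
metric, either to a holomorphic function or to ∞. -/
def IsNormalFamily {E : Type} [NormedAddCommGroup E] [NormedSpace ℂ E]
    (Ω : Set E) (F : Set (E → ℂ)) : Prop :=
  ∀ s : ℕ → E → ℂ, (∀ j, s j ∈ F) →
    ∃ φ : ℕ → ℕ, StrictMono φ ∧
      ((∃ g : E → ℂ, DifferentiableOn ℂ g Ω ∧
          ∀ K, K ⊆ Ω → IsCompact K → ∀ ε > 0, ∃ N, ∀ j ≥ N, ∀ z ∈ K,
            chordal (s (φ j) z) (g z) < ε) ∨
        (∀ K, K ⊆ Ω → IsCompact K → ∀ M : ℝ, ∃ N, ∀ j ≥ N, ∀ z ∈ K, M < ‖s (φ j) z‖))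

section

/-!
On a disc, a holomorphic function omitting `±1` has the form `cos (π * G)`, and the branch can be
chosen so that `G` is controlled at the centre. Applied to `2 * f - 1`, where `f` omits `0` and `1`,
this gives a `G` omitting the integers, so that `G = cos (π * g)` in turn, and `g` omits every `p`
for which `cos (π * p)` is an integer. These `p` include all `m + s * I` with `m` and `cosh (π * s)`
integers, so every point of the plane is within distance `1` of one of them. Hence the image of `g`
contains no disc of radius greater than `1`, and Bloch's theorem bounds `g'` by a constant over the
distance to the boundary. Integrating bounds `g`, hence `f`. In a complex normed space the estimate
follows by restriction to a complex line through the centre of the ball.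
-/

open Complex Metric Set
open scoped Real

variable {c : ℂ} {r : ℝ} {f : ℂ → ℂ}

theorem exists_differentiableOn_exp_eq (hf : DifferentiableOn ℂ f (ball c r))
    (hf₀ : ∀ z ∈ ball c r, f z ≠ 0) :
    ∃ L : ℂ → ℂ, DifferentiableOn ℂ L (ball c r) ∧ ∀ z ∈ ball c r, exp (L z) = f z := by
  obtain ⟨L, hLc, hL⟩ :=
    (((hf.deriv isOpen_ball).div hf hf₀).isExactOn_ball).with_val_at c (log (f c))
  refine ⟨L, fun z hz => (hL z hz).differentiableAt.differentiableWithinAt, fun z hz => ?_⟩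
  have hderiv : ∀ x ∈ ball c r, HasDerivAt (fun x => f x * exp (-L x)) 0 x := fun x hx => by
    have hfx := (hf.differentiableAt (isOpen_ball.mem_nhds hx)).hasDerivAt
    refine (hfx.mul (hL x hx).neg.cexp).congr_deriv ?_
    simp only [Pi.div_apply]
    field_simp [hf₀ x hx]
    ring
  have hc : c ∈ ball c r := mem_ball_self (dist_nonneg.trans_lt hz)
  have hconst : f z * exp (-L z) = f c * exp (-L c) :=
    isOpen_ball.is_const_of_deriv_eq_zero (convex_ball c r).isPreconnected
      (fun x hx => (hderiv x hx).differentiableAt.differentiableWithinAt)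
      (fun x hx => (hderiv x hx).deriv) hz hc
  rw [hLc, exp_neg, exp_neg, exp_log (hf₀ c hc), mul_inv_cancel₀ (hf₀ c hc),
    mul_inv_eq_one₀ (exp_ne_zero _)] at hconst
  exact hconst.symm

theorem exists_differentiableOn_sq_eq (hf : DifferentiableOn ℂ f (ball c r))
    (hf₀ : ∀ z ∈ ball c r, f z ≠ 0) :
    ∃ s : ℂ → ℂ, DifferentiableOn ℂ s (ball c r) ∧ ∀ z ∈ ball c r, s z ^ 2 = f z := by
  obtain ⟨L, hL, hexp⟩ := exists_differentiableOn_exp_eq hf hf₀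
  refine ⟨fun z => exp (L z / 2), (hL.div_const 2).cexp, fun z hz => ?_⟩
  rw [← exp_nat_mul, ← hexp z hz, Nat.cast_ofNat, mul_div_cancel₀ _ two_ne_zero]

/- The roots `f ± √(f ^ 2 - 1)` of `X ^ 2 - 2 * f * X + 1` have product `1`, so they have
holomorphic logarithms; `cos g = f` says that `exp (g * I)` is one of them. -/
theorem exists_differentiableOn_cos_eq (hf : DifferentiableOn ℂ f (ball c r))
    (hf₁ : ∀ z ∈ ball c r, f z ≠ 1 ∧ f z ≠ -1) :
    ∃ g : ℂ → ℂ, DifferentiableOn ℂ g (ball c r) ∧ ∀ z ∈ ball c r, cos (g z) = f z := by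
  obtain ⟨s, hs, hsq⟩ := exists_differentiableOn_sq_eq (f := fun z => f z ^ 2 - 1)
    ((hf.pow 2).sub_const 1)
    fun z hz h => (sq_eq_one_iff.1 (sub_eq_zero.1 h)).elim (hf₁ z hz).1 (hf₁ z hz).2
  have hprod : ∀ z ∈ ball c r, (f z + s z) * (f z - s z) = 1 := fun z hz => by
    linear_combination -hsq z hz
  obtain ⟨L, hL, hexp⟩ := exists_differentiableOn_exp_eq (f := fun z => f z + s z) (hf.add hs)
    fun z hz => left_ne_zero_of_mul_eq_one (hprod z hz)
  refine ⟨fun z => L z / I, hL.div_const I, fun z hz => cos_eq_iff_quadratic.2 ?_⟩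
  rw [div_mul_cancel₀ _ I_ne_zero, hexp z hz]
  linear_combination hsq z hz

theorem abs_im_le_norm_cos (w : ℂ) : |w.im| ≤ ‖cos w‖ := by
  have hpos : ‖exp (w * I)‖ = Real.exp (-w.im) := by simp [norm_exp]
  have hneg : ‖-exp (-w * I)‖ = Real.exp w.im := by simp [norm_exp]
  calc |w.im| ≤ Real.sinh |w.im| := Real.self_le_sinh_iff.2 (abs_nonneg _)
    _ = |Real.exp (-w.im) - Real.exp w.im| / 2 := by
      rw [← Real.abs_sinh, Real.sinh_eq, abs_div, abs_two, abs_sub_comm]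
    _ ≤ ‖exp (w * I) + exp (-w * I)‖ / 2 := by
      rw [← hpos, ← hneg, ← sub_neg_eq_add]
      gcongr
      exact abs_norm_sub_norm_le _ _
    _ = ‖cos w‖ := by rw [cos, norm_div, norm_ofNat]

theorem norm_cos_le_exp_norm (w : ℂ) : ‖cos w‖ ≤ Real.exp ‖w‖ := by
  have hpos : ‖exp (w * I)‖ ≤ Real.exp ‖w‖ := by simpa using norm_exp_le_exp_norm (w * I)
  have hneg : ‖exp (-w * I)‖ ≤ Real.exp ‖w‖ := by simpa using norm_exp_le_exp_norm (-w * I)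
  rw [cos, norm_div, norm_ofNat]
  linarith [norm_add_le (exp (w * I)) (exp (-w * I))]

theorem norm_cos_pi_mul_le (w : ℂ) : ‖cos (π * w)‖ ≤ Real.exp (π * ‖w‖) := by
  simpa [abs_of_pos Real.pi_pos] using norm_cos_le_exp_norm (π * w)

theorem exists_int_norm_sub_two_mul_le (w : ℂ) : ∃ k : ℤ, ‖w - 2 * k‖ ≤ 1 + |w.im| := by
  refine ⟨round (w.re / 2), (norm_le_abs_re_add_abs_im _).trans (add_le_add ?_ (by simp))⟩
  have hre : (w - 2 * round (w.re / 2)).re = 2 * (w.re / 2 - round (w.re / 2)) := by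
    simp only [sub_re, mul_re, re_ofNat, intCast_re, im_ofNat, intCast_im, mul_zero, sub_zero]
    ring
  rw [hre, abs_mul, abs_two]
  linarith [abs_sub_round (w.re / 2)]

theorem exists_differentiableOn_cos_pi_mul_eq (hr : 0 < r) (hf : DifferentiableOn ℂ f (ball c r))
    (hf₁ : ∀ z ∈ ball c r, f z ≠ 1 ∧ f z ≠ -1) :
    ∃ g : ℂ → ℂ, DifferentiableOn ℂ g (ball c r) ∧ (∀ z ∈ ball c r, cos (π * g z) = f z) ∧
      ‖g c‖ ≤ 1 + ‖f c‖ := by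
  obtain ⟨h, hh, hcos⟩ := exists_differentiableOn_cos_eq hf hf₁
  obtain ⟨k, hk⟩ := exists_int_norm_sub_two_mul_le (h c / π)
  have hcos_shift : ∀ z ∈ ball c r, cos (π * (h z / π - 2 * k)) = f z := fun z hz => by
    have hπ : (π : ℂ) ≠ 0 := ofReal_ne_zero.2 Real.pi_ne_zero
    rw [← hcos z hz, ← cos_sub_int_mul_two_pi (h z) k]
    congr 1
    field_simp
  refine ⟨fun z => h z / π - 2 * k, (hh.div_const _).sub_const _, hcos_shift, ?_⟩
  have him : |(h c / π).im| ≤ ‖f c‖ := by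
    rw [← hcos c (mem_ball_self hr)]
    refine le_trans ?_ (abs_im_le_norm_cos _)
    rw [div_ofReal_im, abs_div, abs_of_pos Real.pi_pos]
    exact div_le_self (abs_nonneg _) (by linarith [Real.pi_gt_three])
  exact hk.trans (by gcongr)

theorem cos_pi_mul_int (n : ℤ) : cos (π * n) = 1 ∨ cos (π * n) = -1 := by
  rw [mul_comm, ← sq_eq_one_iff, cos_sq', sin_int_mul_pi]
  simp

theorem two_le_cosh_pi_div_two : 2 ≤ Real.cosh (π / 2) := by
  have hsinh : 3 / 4 ≤ Real.sinh (π / 4) :=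
    le_trans (by linarith [Real.pi_gt_three]) (Real.self_le_sinh_iff.2 (by positivity))
  calc (2 : ℝ) ≤ 1 + 2 * Real.sinh (π / 4) ^ 2 := by nlinarith
    _ = Real.cosh (2 * (π / 4)) := by rw [Real.cosh_two_mul, Real.cosh_sq]; ring
    _ = Real.cosh (π / 2) := by ring_nf

theorem cosh_add_one_le_cosh_add_pi_div_two {x : ℝ} (hx : 0 ≤ x) :
    Real.cosh x + 1 ≤ Real.cosh (x + π / 2) := by
  have hsinh : 0 ≤ Real.sinh x * Real.sinh (π / 2) :=
    mul_nonneg (Real.sinh_nonneg_iff.2 hx) (Real.sinh_nonneg_iff.2 (by positivity))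
  rw [Real.cosh_add]
  nlinarith [Real.one_le_cosh x, two_le_cosh_pi_div_two]

theorem exists_abs_sub_le_cosh_pi_mul_eq_int (y : ℝ) :
    ∃ s : ℝ, |s - y| ≤ 1 / 2 ∧ ∃ n : ℤ, Real.cosh (π * s) = n := by
  wlog hy : 0 ≤ y generalizing y
  · obtain ⟨s, hs, n, hn⟩ := this (-y) (by linarith)
    refine ⟨-s, ?_, n, by rw [mul_neg, Real.cosh_neg, hn]⟩
    rwa [← abs_neg, neg_sub', neg_neg]
  have hgap : Real.cosh (π * y) + 1 ≤ Real.cosh (π * (y + 1 / 2)) := by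
    convert cosh_add_one_le_cosh_add_pi_div_two (mul_nonneg Real.pi_pos.le hy) using 2
    ring
  have hcont : ContinuousOn (fun s => Real.cosh (π * s)) (Icc y (y + 1 / 2)) := by fun_prop
  obtain ⟨s, ⟨hys, hsy⟩, hs⟩ := intermediate_value_Icc (by linarith) hcont
    ⟨Int.le_ceil _, (Int.ceil_lt_add_one _).le.trans hgap⟩
  exact ⟨s, by rw [abs_of_nonneg] <;> linarith, _, hs⟩

/-- The set of `p` with `cos (π * p)` an integer. If `cos (π * cos (π * g))` omits `1` and `-1`,
then `g` omits this set. -/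
def cosPiIntSet : Set ℂ := {p | ∃ n : ℤ, cos (π * p) = n}

theorem exists_mem_cosPiIntSet_dist_le_one (w : ℂ) : ∃ p ∈ cosPiIntSet, dist p w ≤ 1 := by
  obtain ⟨s, hs, n, hn⟩ := exists_abs_sub_le_cosh_pi_mul_eq_int w.im
  refine ⟨round w.re + s * I, ?_, ?_⟩
  · have hcos : cos (π * (round w.re + s * I)) = cos (π * (round w.re : ℤ)) * n := by
      rw [mul_add, cos_add, mul_comm (π : ℂ) (round w.re), sin_int_mul_pi, zero_mul, sub_zero,
        ← mul_assoc, ← ofReal_mul, cos_mul_I, ← ofReal_cosh, hn, ofReal_intCast]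
    rcases cos_pi_mul_int (round w.re) with h | h
    · exact ⟨n, by rw [hcos, h, one_mul]⟩
    · exact ⟨-n, by rw [hcos, h, neg_one_mul, Int.cast_neg]⟩
  · have hre : |(round w.re + s * I - w).re| ≤ 1 / 2 := by
      simpa [abs_sub_comm] using abs_sub_round w.re
    have him : |(round w.re + s * I - w).im| ≤ 1 / 2 := by simpa using hs
    rw [dist_eq_norm]
    linarith [norm_le_abs_re_add_abs_im (round w.re + s * I - w)]

theorem exists_differentiableOn_cos_pi_mul_cos_pi_mul_eq (hr : 0 < r)
    (hf : DifferentiableOn ℂ f (ball c r)) (hf₁ : ∀ z ∈ ball c r, f z ≠ 1 ∧ f z ≠ -1) :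
    ∃ g : ℂ → ℂ, DifferentiableOn ℂ g (ball c r) ∧
      (∀ z ∈ ball c r, cos (π * cos (π * g z)) = f z ∧ g z ∉ cosPiIntSet) ∧
      ‖g c‖ ≤ 2 + ‖f c‖ := by
  obtain ⟨G, hG, hcosG, hGc⟩ := exists_differentiableOn_cos_pi_mul_eq hr hf hf₁
  have hG_int : ∀ z ∈ ball c r, ∀ n : ℤ, G z ≠ n := fun z hz n hn => by
    have hcos := hcosG z hz
    rw [hn] at hcos
    exact (cos_pi_mul_int n).elim (fun h => (hf₁ z hz).1 (hcos.symm.trans h))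
      fun h => (hf₁ z hz).2 (hcos.symm.trans h)
  obtain ⟨g, hg, hcosg, hgc⟩ := exists_differentiableOn_cos_pi_mul_eq hr hG fun z hz =>
    ⟨by simpa using hG_int z hz 1, by simpa using hG_int z hz (-1)⟩
  refine ⟨g, hg, fun z hz => ⟨by rw [hcosg z hz, hcosG z hz], ?_⟩, by linarith⟩
  rintro ⟨n, hn⟩
  exact hG_int z hz n (by rw [← hcosg z hz, hn])

theorem approximatesLinearOn_of_norm_deriv_le {F : Type*} [NormedAddCommGroup F]
    [NormedSpace ℂ F] [CompleteSpace F] {g : ℂ → F} (hg : DifferentiableOn ℂ g (ball c r))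
    (hbound : ∀ z ∈ ball c r, ‖deriv g z‖ ≤ 2 * ‖deriv g c‖) :
    ApproximatesLinearOn g (.toSpanSingleton ℂ (deriv g c)) (ball c (r / 6))
      (‖deriv g c‖₊ / 2) := by
  intro x hx y hy
  have hr : 0 < r := by linarith [dist_nonneg.trans_lt (mem_ball.1 hx)]
  have hsub : ball c (r / 6) ⊆ ball c r := ball_subset_ball (by linarith)
  have hmaps : MapsTo (deriv g) (ball c r) (closedBall (deriv g c) (3 * ‖deriv g c‖)) :=
    fun z hz => by
      rw [mem_closedBall, dist_eq_norm]
      linarith [norm_sub_le (deriv g z) (deriv g c), hbound z hz]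
  refine (convex_ball c (r / 6)).norm_image_sub_le_of_norm_fderiv_le' (𝕜 := ℂ)
    (fun z hz => hg.differentiableAt (isOpen_ball.mem_nhds (hsub hz))) (fun z hz => ?_) hy hx
  have hdz : dist z c ≤ r / 6 := (mem_ball.1 hz).le
  have hfderiv : fderiv ℂ g z - .toSpanSingleton ℂ (deriv g c) =
      .toSpanSingleton ℂ (deriv g z - deriv g c) := by
    ext
    simp
  calc ‖fderiv ℂ g z - .toSpanSingleton ℂ (deriv g c)‖ = dist (deriv g z) (deriv g c) := by
        rw [hfderiv, ContinuousLinearMap.norm_toSpanSingleton, dist_eq_norm]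
    _ ≤ 3 * ‖deriv g c‖ / r * dist z c :=
        Complex.dist_le_div_mul_dist_of_mapsTo_ball (hg.deriv isOpen_ball) hmaps (hsub hz)
    _ ≤ 3 * ‖deriv g c‖ / r * (r / 6) := by gcongr
    _ = (‖deriv g c‖₊ / 2 : NNReal) := by
        rw [NNReal.coe_div, coe_nnnorm, NNReal.coe_ofNat]
        field_simp
        ring

theorem ball_subset_image_of_norm_deriv_le (hf : DifferentiableOn ℂ f (ball c r))
    (hbound : ∀ z ∈ ball c r, ‖deriv f z‖ ≤ 2 * ‖deriv f c‖) :
    ball (f c) (‖deriv f c‖ * r / 24) ⊆ f '' ball c r := by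
  rcases le_or_gt (‖deriv f c‖ * r) 0 with hneg | hpos
  · rw [ball_eq_empty.2 (by linarith)]
    exact empty_subset _
  have hr : 0 < r := pos_of_mul_pos_right hpos (norm_nonneg _)
  have hd : deriv f c ≠ 0 := fun h => by simp [h] at hpos
  let divDeriv : (ContinuousLinearMap.toSpanSingleton ℂ (deriv f c)).NonlinearRightInverse :=
    { toFun := fun y => y / deriv f c
      nnnorm := ‖deriv f c‖₊⁻¹
      bound' := fun y => by simp [div_eq_inv_mul]
      right_inv' := fun y => by simp [hd] }
  have hsurj := (approximatesLinearOn_of_norm_deriv_le hf hbound)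
    |>.surjOn_closedBall_of_nonlinearRightInverse divDeriv (ε := r / 12) (by positivity)
      (closedBall_subset_ball (by linarith))
  have hradius : ((divDeriv.nnnorm : ℝ)⁻¹ - (‖deriv f c‖₊ / 2 : NNReal)) * (r / 12) =
      ‖deriv f c‖ * r / 24 := by
    rw [NNReal.coe_inv, inv_inv, NNReal.coe_div, coe_nnnorm, NNReal.coe_ofNat]
    ring
  rw [hradius] at hsurj
  exact ball_subset_closedBall.trans
    (hsurj.trans (image_mono (closedBall_subset_ball (by linarith))))

theorem exists_mem_closedBall_forall_mem_ball_le_two_mul {X : Type*} [PseudoMetricSpace X]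
    [ProperSpace X] {h : X → ℝ} {a : X} {ρ : ℝ} (hρ : 0 ≤ ρ)
    (hcont : ContinuousOn h (closedBall a ρ)) (hnonneg : ∀ x ∈ closedBall a ρ, 0 ≤ h x) :
    ∃ w ∈ closedBall a ρ, h a * ρ ≤ h w * (ρ - dist w a) ∧
      ∀ z ∈ ball w ((ρ - dist w a) / 2), h z ≤ 2 * h w := by
  obtain ⟨w, hw, hmax⟩ := (isCompact_closedBall a ρ).exists_isMaxOn ⟨a, mem_closedBall_self hρ⟩
    (f := fun z => h z * (ρ - dist z a)) (hcont.mul (by fun_prop))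
  refine ⟨w, hw, by simpa using hmax (mem_closedBall_self hρ), fun z hz => ?_⟩
  rw [mem_ball] at hz
  have hdist : (ρ - dist w a) / 2 ≤ ρ - dist z a := by linarith [dist_triangle z w a]
  have hza : z ∈ closedBall a ρ := mem_closedBall.2 (by linarith [dist_nonneg (x := z) (y := w)])
  have hhalf : h z * ((ρ - dist w a) / 2) ≤ h w * (ρ - dist w a) :=
    (mul_le_mul_of_nonneg_left hdist (hnonneg z hza)).trans (hmax hza)
  nlinarith [dist_nonneg (x := z) (y := w)]

theorem bloch_exists_ball_subset_image (hr : 0 < r) (hf : DifferentiableOn ℂ f (ball c r)) :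
    ∃ w, ball w (‖deriv f c‖ * r / 96) ⊆ f '' ball c r := by
  have hsub : closedBall c (r / 2) ⊆ ball c r := closedBall_subset_ball (by linarith)
  obtain ⟨w, hw, hmax, hle⟩ := exists_mem_closedBall_forall_mem_ball_le_two_mul (half_pos hr).le
    ((hf.deriv isOpen_ball).continuousOn.norm.mono hsub) fun z _ => norm_nonneg (deriv f z)
  have hball : ball w ((r / 2 - dist w c) / 2) ⊆ ball c r :=
    (ball_subset_closedBall.trans (closedBall_subset_closedBall'
      (by linarith [mem_closedBall.1 hw]))).trans hsub
  refine ⟨f w, (ball_subset_ball ?_).trans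
    ((ball_subset_image_of_norm_deriv_le (hf.mono hball) hle).trans (image_mono hball))⟩
  linarith

theorem norm_deriv_le_of_forall_exists_notMem_image {δ : ℝ} (hr : 0 < r)
    (hf : DifferentiableOn ℂ f (ball c r))
    (hδ : ∀ w, ∃ p, dist p w ≤ δ ∧ p ∉ f '' ball c r) : ‖deriv f c‖ ≤ 96 * δ / r := by
  obtain ⟨w, hw⟩ := bloch_exists_ball_subset_image hr hf
  obtain ⟨p, hpw, hp⟩ := hδ w
  have hp_ball : ‖deriv f c‖ * r / 96 ≤ dist p w := not_lt.1 fun hlt => hp (hw hlt)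
  rw [le_div_iff₀ hr]
  linarith

theorem dist_le_of_forall_notMem_cosPiIntSet {z : ℂ} (hf : DifferentiableOn ℂ f (ball c r))
    (hf_omit : ∀ z ∈ ball c r, f z ∉ cosPiIntSet) (hz : z ∈ ball c r) :
    dist (f z) (f c) ≤ 96 * dist z c / (r - dist z c) := by
  rw [mem_ball] at hz
  have hsub : closedBall c (dist z c) ⊆ ball c r := closedBall_subset_ball hz
  have hderiv : ∀ x ∈ closedBall c (dist z c), ‖deriv f x‖ ≤ 96 / (r - dist z c) := by
    intro x hx
    have hball : ball x (r - dist z c) ⊆ ball c r :=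
      ball_subset_ball' (by linarith [mem_closedBall.1 hx])
    have hnet : ∀ w, ∃ p, dist p w ≤ 1 ∧ p ∉ f '' ball x (r - dist z c) := fun w => by
      obtain ⟨p, hp, hpw⟩ := exists_mem_cosPiIntSet_dist_le_one w
      refine ⟨p, hpw, ?_⟩
      rintro ⟨u, hu, rfl⟩
      exact hf_omit u (hball hu) hp
    simpa using norm_deriv_le_of_forall_exists_notMem_image (sub_pos.2 hz) (hf.mono hball) hnet
  have hle := (convex_closedBall c (dist z c)).norm_image_sub_le_of_norm_deriv_le
    (fun x hx => hf.differentiableAt (isOpen_ball.mem_nhds (hsub hx))) hderiv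
    (mem_closedBall_self dist_nonneg) (mem_closedBall.2 le_rfl)
  rwa [← dist_eq_norm, ← dist_eq_norm, ← mul_div_right_comm] at hle

/-- Schottky's bound at relative distance `t` from the centre of a ball, for a holomorphic function
that omits `0` and `1` there and has modulus `M` at the centre. With `2 * f - 1` written as
`cos (π * cos (π * g))`, `3 + 2 * M` bounds `g` at the centre, and `96` is the inverse of the
constant in Bloch's theorem. Only `t < 1` is meaningful. -/
noncomputable def schottkyBound (M t : ℝ) : ℝ :=
  Real.exp (π * Real.exp (π * (3 + 2 * M + 96 * t / (1 - t))))

theorem schottkyBound_le_schottkyBound {M M' t t' : ℝ} (hM : M ≤ M') (ht : t ≤ t')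
    (ht' : t' < 1) : schottkyBound M t ≤ schottkyBound M' t' := by
  have hfrac : 96 * t / (1 - t) ≤ 96 * t' / (1 - t') := by
    rw [div_le_div_iff₀ (by linarith) (by linarith)]
    linarith
  unfold schottkyBound
  gcongr

theorem norm_half_one_add_cos_pi_mul_cos_pi_mul_le (w : ℂ) :
    ‖(1 + cos (π * cos (π * w))) / 2‖ ≤ Real.exp (π * Real.exp (π * ‖w‖)) := by
  have hcos : ‖cos (π * cos (π * w))‖ ≤ Real.exp (π * Real.exp (π * ‖w‖)) :=
    (norm_cos_pi_mul_le _).trans (by gcongr; exact norm_cos_pi_mul_le w)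
  have hone : 1 ≤ Real.exp (π * Real.exp (π * ‖w‖)) := Real.one_le_exp (by positivity)
  rw [norm_div, norm_ofNat]
  linarith [norm_add_le 1 (cos (π * cos (π * w))), norm_one (α := ℂ)]

theorem norm_le_schottkyBound {z : ℂ} (hf : DifferentiableOn ℂ f (ball c r))
    (hf₀₁ : ∀ z ∈ ball c r, f z ≠ 0 ∧ f z ≠ 1) (hz : z ∈ ball c r) :
    ‖f z‖ ≤ schottkyBound ‖f c‖ (dist z c / r) := by
  have hr : 0 < r := dist_nonneg.trans_lt hz
  obtain ⟨g, hg, hgf, hgc⟩ := exists_differentiableOn_cos_pi_mul_cos_pi_mul_eq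
    (f := fun z => 2 * f z - 1) hr ((hf.const_mul 2).sub_const 1) fun z hz =>
      ⟨fun h => (hf₀₁ z hz).2 (by linear_combination h / 2),
        fun h => (hf₀₁ z hz).1 (by linear_combination h / 2)⟩
  have hg_norm : ‖g z‖ ≤ 3 + 2 * ‖f c‖ + 96 * (dist z c / r) / (1 - dist z c / r) := by
    have hfc : ‖2 * f c - 1‖ ≤ 2 * ‖f c‖ + 1 := by simpa using norm_sub_le (2 * f c) 1
    have hdist : dist (g z) (g c) ≤ 96 * (dist z c / r) / (1 - dist z c / r) := by
      convert dist_le_of_forall_notMem_cosPiIntSet hg (fun z hz => (hgf z hz).2) hz using 1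
      field_simp
    rw [dist_eq_norm] at hdist
    linarith [norm_le_norm_sub_add (g z) (g c), hgc]
  calc ‖f z‖ = ‖(1 + cos (π * cos (π * g z))) / 2‖ := by
        rw [(hgf z hz).1]
        ring_nf
    _ ≤ Real.exp (π * Real.exp (π * ‖g z‖)) := norm_half_one_add_cos_pi_mul_cos_pi_mul_le _
    _ ≤ schottkyBound ‖f c‖ (dist z c / r) := by
        unfold schottkyBound
        gcongr

theorem stmt6_general {E : Type*} [NormedAddCommGroup E] [NormedSpace ℂ E] {f : E → ℂ} {c z : E}
    {r : ℝ} (hf : DifferentiableOn ℂ f (ball c r))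
    (hf₀₁ : ∀ z ∈ ball c r, f z ≠ 0 ∧ f z ≠ 1) (hz : z ∈ ball c r) :
    ‖f z‖ ≤ schottkyBound ‖f c‖ (dist z c / r) := by
  set u : E := NormedSpace.normalize (z - c)
  have hu : ‖u‖ ≤ 1 := by
    rcases eq_or_ne (z - c) 0 with h | h
    · simp [u, h]
    · exact (NormedSpace.norm_normalize h).le
  have hmaps : MapsTo (fun w : ℂ => c + w • u) (ball 0 r) (ball c r) := fun w hw => by
    rw [mem_ball_iff_norm, add_sub_cancel_left, norm_smul]
    exact (mul_le_of_le_one_right (norm_nonneg w) hu).trans_lt (mem_ball_zero_iff.1 hw)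
  have hz_slice : c + dist z c • u = z := by
    rw [dist_eq_norm, NormedSpace.norm_smul_normalize, add_sub_cancel]
  have hbound := norm_le_schottkyBound (f := fun w : ℂ => f (c + w • u)) (z := dist z c)
    (hf.comp (by fun_prop) hmaps) (fun w hw => hf₀₁ _ (hmaps hw)) (by simpa using hz)
  simpa [hz_slice] using hbound

end

/-- Schottky's theorem in the unit ball of ℂⁿ. -/
theorem stmt6 (n : ℕ) (M r : ℝ) (hM : 0 < M) (hr0 : 0 < r) (hr1 : r < 1) :
    ∃ C > 0, ∀ f : Cn n → ℂ,
      DifferentiableOn ℂ f (Metric.ball 0 1) →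
      (∀ z ∈ Metric.ball (0 : Cn n) 1, f z ≠ 0 ∧ f z ≠ 1) →
      ‖f 0‖ ≤ M → ∀ z : Cn n, ‖z‖ ≤ r → ‖f z‖ ≤ C :=
  ⟨schottkyBound M r, Real.exp_pos _, fun _ hf h01 h0 z hz =>
    (stmt6_general hf h01 (mem_ball_zero_iff.2 (hz.trans_lt hr1))).trans
      (schottkyBound_le_schottkyBound h0 (by simpa using hz) hr1)⟩
end

section
/- Carathéodory's normality theorem: Let 𝓕 be a family of holomorphic functions on a domain Ω ⊆ ℂⁿ. Suppose there is ε > 0 such that for each f ∈ 𝓕 there are distinct points a_f, b_f ∈ ℂ with f(z) ≠ a_f and f(z) ≠ b_f for all z ∈ Ω, and s(a_f, ∞)·s(a_f, b_f)·s(∞, b_f) > ε, where s is the spherical (chordal) distance on the Riemann sphere. Then 𝓕 is normal on Ω. -/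
open Filter Topology

/-!
Let `h` be holomorphic on the unit disc and omit `0` and `1`. Taking a logarithm and then an inverse
hyperbolic cosine, Landau writes `h = -exp (π i cosh k)`, where `cosh k` omits the odd integers. The
solutions of `cosh v = m` with `m` odd come within a bounded distance of every point of the plane,
so `k` is constrained by Bloch's theorem: its derivative is bounded on smaller discs. This is
Schottky's theorem: `|h|` is bounded on smaller discs in terms of `|h 0|`.

The chordal hypothesis keeps the omitted values `a` and `b` in a fixed disc and at least `ε` apart.
Applied to `(f - a) / (b - a)` on complex lines, Schottky's theorem then shows that a bound for `f`
at one point gives a bound at every nearby point, uniformly over the family. Chaining such bounds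
along the connected set `Ω`, a sequence with a subsequence bounded at one point has a locally
bounded subsequence, to which Montel's theorem applies; any other sequence tends to infinity
uniformly on compact sets.
-/

section Bloch

open Metric

theorem ball_subset_image_closedBall_of_norm_deriv_sub_le {g : ℂ → ℂ} {p : ℂ} {s : ℝ}
    (hg : ∀ z ∈ closedBall p s, DifferentiableAt ℂ g z)
    (hvar : ∀ z ∈ closedBall p s, ‖deriv g z - deriv g p‖ ≤ ‖deriv g p‖ / 2) :
    ball (g p) (‖deriv g p‖ * s / 4) ⊆ g '' closedBall p s := by
  rcases le_or_gt (‖deriv g p‖ * s) 0 with hle | hlt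
  · rw [ball_eq_empty.2 (by linarith)]
    exact Set.empty_subset _
  have hderiv : 0 < ‖deriv g p‖ := (norm_nonneg _).lt_of_ne' (left_ne_zero_of_mul hlt.ne')
  have hs : 0 < s := pos_of_mul_pos_right hlt hderiv.le
  have hsphere : ∀ z ∈ sphere p s, ‖deriv g p‖ * s / 2 ≤ ‖g z - g p‖ := by
    intro z hz
    have hlin : ∀ x ∈ closedBall p s, HasDerivWithinAt (fun w ↦ g w - deriv g p * w)
        (deriv g x - deriv g p) (closedBall p s) x := fun x hx ↦ by
      simpa using ((hg x hx).hasDerivAt.fun_sub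
        ((hasDerivAt_id' x).const_mul (deriv g p))).hasDerivWithinAt
    have hmean := (convex_closedBall p s).norm_image_sub_le_of_norm_hasDerivWithin_le hlin hvar
      (mem_closedBall_self hs.le) (sphere_subset_closedBall hz)
    have htri := norm_sub_le (g z - g p) (g z - deriv g p * z - (g p - deriv g p * p))
    rw [show g z - g p - (g z - deriv g p * z - (g p - deriv g p * p)) = deriv g p * (z - p) by
      ring, norm_mul] at htri
    rw [mem_sphere_iff_norm.1 hz] at hmean htri
    linarith
  have hnonconst : ∃ᶠ z in 𝓝 p, g z ≠ g p := by
    intro hconst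
    have heq : g =ᶠ[𝓝 p] fun _ ↦ g p := hconst.mono fun z hz ↦ not_not.1 hz
    have hzero : deriv g p = 0 := by rw [heq.deriv_eq, deriv_const]
    exact hderiv.ne' (by rw [hzero, norm_zero])
  have hdc : DiffContOnCl ℂ g (ball p s) :=
    DifferentiableOn.diffContOnCl fun z hz ↦
      (hg z (closure_ball_subset_closedBall hz)).differentiableWithinAt
  convert hdc.ball_subset_image_closedBall hs hsphere hnonconst using 2
  ring

theorem ball_subset_image_ball_of_norm_deriv_le {g : ℂ → ℂ} {p : ℂ} {t : ℝ}
    (hg : DifferentiableOn ℂ g (ball p t))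
    (hderiv : ∀ z ∈ ball p t, ‖deriv g z‖ ≤ 2 * ‖deriv g p‖) :
    ball (g p) (‖deriv g p‖ * t / 32) ⊆ g '' ball p t := by
  rcases le_or_gt t 0 with ht | ht
  · rw [ball_eq_empty.2 (by linarith [mul_nonpos_of_nonneg_of_nonpos (norm_nonneg (deriv g p)) ht])]
    exact Set.empty_subset _
  have hsub : closedBall p (t / 8) ⊆ ball p t := closedBall_subset_ball (by linarith)
  have hmaps : Set.MapsTo (deriv g) (ball p t) (closedBall (deriv g p) (4 * ‖deriv g p‖)) := by
    intro z hz
    rw [mem_closedBall_iff_norm]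
    linarith [norm_sub_le (deriv g z) (deriv g p), hderiv z hz, norm_nonneg (deriv g p)]
  have hvar : ∀ z ∈ closedBall p (t / 8), ‖deriv g z - deriv g p‖ ≤ ‖deriv g p‖ / 2 := by
    intro z hz
    calc ‖deriv g z - deriv g p‖ ≤ 4 * ‖deriv g p‖ / t * dist z p := by
          simpa only [dist_eq_norm] using Complex.dist_le_div_mul_dist_of_mapsTo_ball
            (hg.deriv isOpen_ball) hmaps (hsub hz)
      _ ≤ 4 * ‖deriv g p‖ / t * (t / 8) := by gcongr; exact hz
      _ = ‖deriv g p‖ / 2 := by field_simp; ring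
  have hball := ball_subset_image_closedBall_of_norm_deriv_sub_le
    (fun z hz ↦ hg.differentiableAt (isOpen_ball.mem_nhds (hsub hz))) hvar
  rw [show ‖deriv g p‖ * (t / 8) / 4 = ‖deriv g p‖ * t / 32 by ring] at hball
  exact hball.trans (Set.image_mono hsub)

-- The centre `p` of the image disc maximises `(r / 2 - |z - c|) |f' z|`, so that `f'` at most
-- doubles on the disc of radius `(r / 2 - |p - c|) / 2` about `p`.
theorem bloch {f : ℂ → ℂ} {c : ℂ} {r : ℝ} (hr : 0 < r) (hf : DifferentiableOn ℂ f (ball c r)) :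
    ∃ p ∈ ball c r, ball (f p) (‖deriv f c‖ * r / 128) ⊆ f '' ball c r := by
  have hsub : closedBall c (r / 2) ⊆ ball c r := closedBall_subset_ball (by linarith)
  have hcont : ContinuousOn (fun z ↦ (r / 2 - dist z c) * ‖deriv f z‖) (closedBall c (r / 2)) :=
    ContinuousOn.mul (by fun_prop) ((hf.deriv isOpen_ball).continuousOn.mono hsub).norm
  obtain ⟨p, hp, hmax⟩ := (isCompact_closedBall c (r / 2)).exists_isMaxOn
    ⟨c, mem_closedBall_self (by linarith)⟩ hcont
  refine ⟨p, hsub hp, ?_⟩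
  rw [mem_closedBall] at hp
  have hcentre : r / 2 * ‖deriv f c‖ ≤ (r / 2 - dist p c) * ‖deriv f p‖ := by
    simpa using hmax (mem_closedBall_self (by linarith : 0 ≤ r / 2))
  rcases hp.eq_or_lt with hp | hp
  · rw [hp, sub_self, zero_mul] at hcentre
    rw [ball_eq_empty.2 (by linarith)]
    exact Set.empty_subset _
  obtain ⟨t, ht⟩ : ∃ t, r / 2 - dist p c = 2 * t := ⟨_, (mul_div_cancel₀ _ two_ne_zero).symm⟩
  rw [ht] at hcentre
  have hdist : ∀ z ∈ ball p t, t ≤ r / 2 - dist z c := by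
    intro z hz
    linarith [dist_triangle z p c, mem_ball.1 hz]
  have hdisc : ball p t ⊆ ball c r := fun z hz ↦ by
    rw [mem_ball]
    linarith [hdist z hz]
  have hdouble : ∀ z ∈ ball p t, ‖deriv f z‖ ≤ 2 * ‖deriv f p‖ := by
    intro z hz
    refine le_of_mul_le_mul_left ?_ (by linarith : 0 < t)
    calc t * ‖deriv f z‖ ≤ (r / 2 - dist z c) * ‖deriv f z‖ := by gcongr; exact hdist z hz
      _ ≤ (r / 2 - dist p c) * ‖deriv f p‖ :=
          hmax (mem_closedBall.2 (by linarith [hdist z hz]))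
      _ = t * (2 * ‖deriv f p‖) := by rw [ht]; ring
  calc ball (f p) (‖deriv f c‖ * r / 128) ⊆ ball (f p) (‖deriv f p‖ * t / 32) :=
        ball_subset_ball (by linarith)
    _ ⊆ f '' ball p t := ball_subset_image_ball_of_norm_deriv_le (hf.mono hdisc) hdouble
    _ ⊆ f '' ball c r := Set.image_mono hdisc

theorem norm_deriv_mul_le_of_forall_exists_notMem_image {f : ℂ → ℂ} {c : ℂ} {r ρ : ℝ} (hr : 0 < r)
    (hf : DifferentiableOn ℂ f (ball c r)) (hgap : ∀ w, ∃ v ∈ ball w ρ, v ∉ f '' ball c r) :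
    ‖deriv f c‖ * r ≤ 128 * ρ := by
  by_contra! hlt
  obtain ⟨p, -, hp⟩ := bloch hr hf
  obtain ⟨v, hv, hvf⟩ := hgap (f p)
  exact hvf (hp (ball_subset_ball (by linarith) hv))

end Bloch

section Landau

open Complex

variable {U : Set ℂ}

theorem exists_differentiableOn_exp_eq_s8 (hU : IsOpen U) (hUc : IsSimplyConnected U) {g : ℂ → ℂ}
    (hg : DifferentiableOn ℂ g U) (hg0 : ∀ z ∈ U, g z ≠ 0) :
    ∃ ℓ, DifferentiableOn ℂ ℓ U ∧ ∀ z ∈ U, exp (ℓ z) = g z := by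
  obtain ⟨ℓ, hℓ, hexp⟩ := exists_continuousOn_eqOn_exp_comp hUc hU hg.continuousOn
    (by rintro ⟨z, hz, hgz⟩; exact hg0 z hz hgz)
  refine ⟨ℓ, fun z hz ↦ ?_, hexp⟩
  have hzU := hU.mem_nhds hz
  have hderiv := HasDerivAt.of_comp_left (hℓ.continuousAt hzU) (hasDerivAt_exp (ℓ z))
    (hg.differentiableAt hzU).hasDerivAt (exp_ne_zero _) (hexp.eventuallyEq_of_mem hzU)
  exact hderiv.differentiableAt.differentiableWithinAt

theorem exists_differentiableOn_exp_eq_of_exp_eq (hU : IsOpen U) (hUc : IsSimplyConnected U)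
    {g : ℂ → ℂ} (hg : DifferentiableOn ℂ g U) (hg0 : ∀ z ∈ U, g z ≠ 0) {x₀ w : ℂ} (hx₀ : x₀ ∈ U)
    (hw : exp w = g x₀) :
    ∃ ℓ, DifferentiableOn ℂ ℓ U ∧ ℓ x₀ = w ∧ ∀ z ∈ U, exp (ℓ z) = g z := by
  obtain ⟨ℓ, hℓ, hexp⟩ := exists_differentiableOn_exp_eq_s8 hU hUc hg hg0
  refine ⟨fun z ↦ ℓ z + (w - ℓ x₀), hℓ.add_const _, by ring, fun z hz ↦ ?_⟩
  rw [exp_add, exp_sub, hexp z hz, hexp x₀ hx₀, hw, div_self (hg0 x₀ hx₀), mul_one]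

theorem exists_differentiableOn_cosh_eq (hU : IsOpen U) (hUc : IsSimplyConnected U) {g : ℂ → ℂ}
    (hg : DifferentiableOn ℂ g U) (hg1 : ∀ z ∈ U, g z ≠ 1 ∧ g z ≠ -1) :
    ∃ k, DifferentiableOn ℂ k U ∧ ∀ z ∈ U, cosh (k z) = g z := by
  obtain ⟨ℓ, hℓ, hℓexp⟩ := exists_differentiableOn_exp_eq_s8 hU hUc ((hg.pow 2).sub_const 1)
    fun z hz ↦ by simpa [sub_eq_zero] using hg1 z hz
  have hsqrt : ∀ z ∈ U, exp (ℓ z / 2) ^ 2 = g z ^ 2 - 1 := fun z hz ↦ by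
    rw [← exp_nat_mul, Nat.cast_ofNat, mul_div_cancel₀ _ two_ne_zero]
    exact hℓexp z hz
  have hinv : ∀ z ∈ U, (g z + exp (ℓ z / 2)) * (g z - exp (ℓ z / 2)) = 1 := fun z hz ↦ by
    linear_combination -hsqrt z hz
  obtain ⟨k, hk, hkexp⟩ := exists_differentiableOn_exp_eq_s8 hU hUc (hg.add (hℓ.div_const 2).cexp)
    fun z hz ↦ left_ne_zero_of_mul_eq_one (hinv z hz)
  refine ⟨k, hk, fun z hz ↦ ?_⟩
  have hneg : exp (-k z) = g z - exp (ℓ z / 2) := by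
    rw [exp_neg, hkexp z hz]
    exact inv_eq_of_mul_eq_one_right (hinv z hz)
  rw [cosh, hneg, hkexp z hz]
  simp only [Pi.add_apply]
  ring

theorem exp_pi_mul_I_mul_of_odd {m : ℤ} (hm : Odd m) : exp (Real.pi * I * m) = -1 := by
  obtain ⟨n, rfl⟩ := hm
  rw [show (Real.pi * I * (2 * n + 1 : ℤ) : ℂ) = n * (2 * Real.pi * I) + Real.pi * I by
    push_cast; ring, exp_add, exp_int_mul_two_pi_mul_I, exp_pi_mul_I, one_mul]

theorem exists_eq_neg_exp_pi_mul_I_mul_cosh (hU : IsOpen U) (hUc : IsSimplyConnected U) {h : ℂ → ℂ}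
    (hh : DifferentiableOn ℂ h U) (hh01 : ∀ z ∈ U, h z ≠ 0 ∧ h z ≠ 1) {x₀ : ℂ} (hx₀ : x₀ ∈ U) :
    ∃ k, DifferentiableOn ℂ k U ∧ (∀ z ∈ U, h z = -exp (Real.pi * I * cosh (k z))) ∧
      Real.pi * I * cosh (k x₀) = log (-h x₀) := by
  have hne : ∀ z ∈ U, -h z ≠ 0 := fun z hz ↦ neg_ne_zero.2 (hh01 z hz).1
  obtain ⟨ℓ, hℓ, hℓx₀, hexp⟩ :=
    exists_differentiableOn_exp_eq_of_exp_eq hU hUc hh.fun_neg hne hx₀ (exp_log (hne x₀ hx₀))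
  have hπI : (Real.pi * I : ℂ) ≠ 0 := mul_ne_zero (ofReal_ne_zero.2 Real.pi_ne_zero) I_ne_zero
  have hmul : ∀ z, Real.pi * I * (ℓ z / (Real.pi * I)) = ℓ z := fun z ↦ mul_div_cancel₀ _ hπI
  have hodd : ∀ z ∈ U, ∀ m : ℤ, Odd m → ℓ z / (Real.pi * I) ≠ m := fun z hz m hm hzm ↦ by
    have hz1 : -1 = -h z := by
      rw [← exp_pi_mul_I_mul_of_odd hm, ← hzm, hmul]
      exact hexp z hz
    exact (hh01 z hz).2 (neg_injective hz1).symm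
  obtain ⟨k, hk, hcosh⟩ := exists_differentiableOn_cosh_eq hU hUc (hℓ.div_const (Real.pi * I))
    fun z hz ↦ ⟨by simpa using hodd z hz 1 odd_one, by simpa using hodd z hz (-1) (by decide)⟩
  refine ⟨k, hk, fun z hz ↦ ?_, by rw [hcosh x₀ hx₀, hmul, hℓx₀]⟩
  rw [hcosh z hz, hmul, hexp z hz, neg_neg]

theorem exists_real_cosh_eq_odd (y : ℝ) :
    ∃ x, |x - y| ≤ 2 ∧ ∃ m : ℤ, Odd m ∧ Real.cosh x = m := by
  wlog hy : 0 ≤ y generalizing y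
  · obtain ⟨x, hxy, m, hm, hx⟩ := this (-y) (by linarith)
    refine ⟨-x, ?_, m, hm, by rw [Real.cosh_neg, hx]⟩
    rwa [← abs_neg, show -(-x - y) = x - -y by ring]
  have hstep : Real.cosh y + 2 ≤ Real.cosh (y + 2) := by
    have hsinh : 1 ≤ Real.sinh 1 := Real.self_le_sinh_iff.2 zero_le_one
    have hcosh : 3 ≤ Real.cosh 2 := by
      have htwo := Real.cosh_two_mul 1
      rw [mul_one, Real.cosh_sq] at htwo
      nlinarith
    rw [Real.cosh_add]
    have hprod : 0 ≤ Real.sinh y * Real.sinh 2 :=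
      mul_nonneg (Real.sinh_nonneg_iff.2 hy) (Real.sinh_nonneg_iff.2 zero_le_two)
    nlinarith [Real.one_le_cosh y]
  set n : ℤ := ⌈(Real.cosh y - 1) / 2⌉
  have hlo : Real.cosh y ≤ (2 * n + 1 : ℤ) := by
    push_cast
    linarith [Int.le_ceil ((Real.cosh y - 1) / 2)]
  have hhi : ((2 * n + 1 : ℤ) : ℝ) ≤ Real.cosh (y + 2) := by
    push_cast
    linarith [Int.ceil_lt_add_one ((Real.cosh y - 1) / 2)]
  have hone : (1 : ℝ) ≤ (2 * n + 1 : ℤ) := (Real.one_le_cosh y).trans hlo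
  have hx := Real.cosh_arcosh hone
  have hx0 := Real.arcosh_nonneg hone
  refine ⟨Real.arcosh (2 * n + 1 : ℤ), ?_, _, odd_two_mul_add_one n, hx⟩
  rw [← hx, Real.cosh_le_cosh, abs_of_nonneg hx0, abs_of_nonneg (by linarith)] at hhi
  rw [← hx, Real.cosh_le_cosh, abs_of_nonneg hx0, abs_of_nonneg hy] at hlo
  rw [abs_le]
  constructor <;> linarith

theorem exists_mem_ball_cosh_eq_odd (w : ℂ) :
    ∃ v ∈ Metric.ball w 4, ∃ m : ℤ, Odd m ∧ cosh v = m := by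
  obtain ⟨x, hx, m, hm, hcosh⟩ := exists_real_cosh_eq_odd w.re
  set n : ℤ := round (w.im / Real.pi)
  refine ⟨x + n * (Real.pi * I), ?_, n.negOnePow * m, ?_, ?_⟩
  · have him : |n * Real.pi - w.im| ≤ Real.pi / 2 := by
      rw [show n * Real.pi - w.im = -((w.im / Real.pi - n) * Real.pi) by field_simp; ring, abs_neg,
        abs_mul, abs_of_pos Real.pi_pos]
      linarith [mul_le_mul_of_nonneg_right (abs_sub_round (w.im / Real.pi)) Real.pi_pos.le]
    have hnorm := norm_le_abs_re_add_abs_im (x + n * (Real.pi * I) - w)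
    simp only [sub_re, add_re, ofReal_re, mul_re, intCast_re, I_re, mul_zero, ofReal_im, I_im,
      mul_one, sub_self, intCast_im, mul_im, add_zero, zero_mul, sub_im, add_im, zero_add] at hnorm
    rw [mem_ball_iff_norm]
    linarith [Real.pi_lt_four]
  · rcases Int.units_eq_one_or n.negOnePow with h | h <;> simpa [h] using hm
  · have : cosh (x : ℂ) = m := by exact_mod_cast congrArg ofReal hcosh
    rw [cosh_antiperiodic.add_int_mul_eq, this]
    push_cast
    rfl

theorem abs_re_le_norm_cosh (z : ℂ) : |z.re| ≤ ‖cosh z‖ := by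
  have htri := abs_norm_sub_norm_le (exp z) (-exp (-z))
  rw [norm_neg, sub_neg_eq_add, norm_exp, norm_exp, neg_re] at htri
  calc |z.re| ≤ Real.sinh |z.re| := Real.self_le_sinh_iff.2 (abs_nonneg _)
    _ = |Real.exp z.re - Real.exp (-z.re)| / 2 := by
        rw [← Real.abs_sinh, Real.sinh_eq, abs_div, abs_two]
    _ ≤ ‖cosh z‖ := by
        rw [cosh, norm_div, norm_ofNat]
        gcongr

theorem norm_cosh_le_cosh_re (z : ℂ) : ‖cosh z‖ ≤ Real.cosh z.re := by
  have htri := norm_add_le (exp z) (exp (-z))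
  rw [norm_exp, norm_exp, neg_re] at htri
  rw [cosh, norm_div, norm_ofNat, Real.cosh_eq]
  gcongr

theorem norm_log_le_of_mem_Icc {z : ℂ} {R : ℝ} (hz : ‖z‖ ∈ Set.Icc (1 / 2) R) :
    ‖log z‖ ≤ R + 1 + Real.pi := by
  have hpos : 0 < ‖z‖ := by linarith [hz.1]
  have hinv : ‖z‖⁻¹ ≤ 2 := inv_le_of_inv_le₀ two_pos (by linarith [hz.1])
  have hlog : |Real.log ‖z‖| ≤ R + 1 := abs_le.2
    ⟨by linarith [Real.one_sub_inv_le_log_of_pos hpos, hz.1, hz.2],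
      by linarith [Real.log_le_sub_one_of_pos hpos, hz.2]⟩
  calc ‖log z‖ ≤ |(log z).re| + |(log z).im| := norm_le_abs_re_add_abs_im _
    _ ≤ R + 1 + Real.pi := by
        rw [log_re, log_im]
        exact add_le_add hlog (abs_arg_le_pi z)

end Landau

section Schottky

open Complex Metric

theorem isSimplyConnected_ball {E : Type*} [NormedAddCommGroup E] [NormedSpace ℝ E] (c : E) {r : ℝ}
    (hr : 0 < r) : IsSimplyConnected (ball c r) := by
  have := (convex_ball c r).contractibleSpace ⟨c, mem_ball_self hr⟩
  exact inferInstanceAs (SimplyConnectedSpace (ball c r))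

theorem norm_deriv_mul_le_of_cosh_ne_odd {k : ℂ → ℂ} {c : ℂ} {r : ℝ} (hr : 0 < r)
    (hk : DifferentiableOn ℂ k (ball c r))
    (hodd : ∀ z ∈ ball c r, ∀ m : ℤ, Odd m → cosh (k z) ≠ m) : ‖deriv k c‖ * r ≤ 512 := by
  have hgap : ∀ w, ∃ v ∈ ball w 4, v ∉ k '' ball c r := by
    intro w
    obtain ⟨v, hv, m, hm, hcosh⟩ := exists_mem_ball_cosh_eq_odd w
    refine ⟨v, hv, ?_⟩
    rintro ⟨z, hz, rfl⟩
    exact hodd z hz m hm hcosh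
  linarith [norm_deriv_mul_le_of_forall_exists_notMem_image hr hk hgap]

theorem norm_sub_le_of_cosh_ne_odd {k : ℂ → ℂ} (hk : DifferentiableOn ℂ k (ball 0 1))
    (hodd : ∀ z ∈ ball (0 : ℂ) 1, ∀ m : ℤ, Odd m → cosh (k z) ≠ m) {r : ℝ} (hr : r < 1) {z : ℂ}
    (hz : z ∈ closedBall 0 r) : ‖k z - k 0‖ ≤ 512 / (1 - r) := by
  have hr0 : 0 ≤ r := nonempty_closedBall.1 ⟨z, hz⟩
  have hderiv : ∀ w ∈ closedBall (0 : ℂ) r, ‖deriv k w‖ ≤ 512 / (1 - r) := by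
    intro w hw
    have hsub : ball w (1 - r) ⊆ ball 0 1 := ball_subset_ball' (by linarith [mem_closedBall.1 hw])
    rw [le_div_iff₀ (by linarith)]
    exact norm_deriv_mul_le_of_cosh_ne_odd (by linarith) (hk.mono hsub)
      fun z hz ↦ hodd z (hsub hz)
  have hdiff : ∀ w ∈ closedBall (0 : ℂ) r, DifferentiableAt ℂ k w := fun w hw ↦
    hk.differentiableAt (isOpen_ball.mem_nhds (closedBall_subset_ball hr hw))
  calc ‖k z - k 0‖ ≤ 512 / (1 - r) * ‖z - 0‖ :=
        (convex_closedBall 0 r).norm_image_sub_le_of_norm_deriv_le hdiff hderiv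
          (mem_closedBall_self hr0) hz
    _ ≤ 512 / (1 - r) * 1 := by
        gcongr
        exact (mem_closedBall_iff_norm.1 hz).trans hr.le
    _ = 512 / (1 - r) := mul_one _

theorem norm_le_of_omits_zero_one_of_half_le {h : ℂ → ℂ} (hh : DifferentiableOn ℂ h (ball 0 1))
    (hh01 : ∀ z ∈ ball (0 : ℂ) 1, h z ≠ 0 ∧ h z ≠ 1) {R : ℝ} (h0 : ‖h 0‖ ∈ Set.Icc (1 / 2) R)
    {r : ℝ} (hr : r < 1) {z : ℂ} (hz : z ∈ closedBall 0 r) :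
    ‖h z‖ ≤ Real.exp (Real.pi * Real.cosh (R + 1 + Real.pi + 512 / (1 - r))) := by
  obtain ⟨k, hk, hexp, hk0⟩ := exists_eq_neg_exp_pi_mul_I_mul_cosh isOpen_ball
    (isSimplyConnected_ball 0 one_pos) hh hh01 (mem_ball_self one_pos)
  have hodd : ∀ z ∈ ball (0 : ℂ) 1, ∀ m : ℤ, Odd m → cosh (k z) ≠ m := fun z hz m hm hzm ↦
    (hh01 z hz).2 (by rw [hexp z hz, hzm, exp_pi_mul_I_mul_of_odd hm, neg_neg])
  have hnorm : ∀ w : ℂ, ‖Real.pi * I * w‖ = Real.pi * ‖w‖ := fun w ↦ by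
    simp [Real.pi_pos.le]
  have hre0 : |(k 0).re| ≤ R + 1 + Real.pi :=
    calc |(k 0).re| ≤ ‖cosh (k 0)‖ := abs_re_le_norm_cosh _
      _ ≤ Real.pi * ‖cosh (k 0)‖ :=
          le_mul_of_one_le_left (norm_nonneg _) (by linarith [Real.pi_gt_three])
      _ = ‖log (-h 0)‖ := by rw [← hk0, hnorm]
      _ ≤ R + 1 + Real.pi := norm_log_le_of_mem_Icc (by rwa [norm_neg])
  have hre : |(k z).re| ≤ R + 1 + Real.pi + 512 / (1 - r) :=
    calc |(k z).re| = |(k 0).re + (k z - k 0).re| := by rw [sub_re, add_sub_cancel]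
      _ ≤ |(k 0).re| + |(k z - k 0).re| := abs_add_le _ _
      _ ≤ R + 1 + Real.pi + 512 / (1 - r) := add_le_add hre0
          ((abs_re_le_norm _).trans (norm_sub_le_of_cosh_ne_odd hk hodd hr hz))
  calc ‖h z‖ = Real.exp (Real.pi * I * cosh (k z)).re := by
        rw [hexp z (closedBall_subset_ball hr hz), norm_neg, norm_exp]
    _ ≤ Real.exp (Real.pi * ‖cosh (k z)‖) := by
        rw [← hnorm]
        gcongr
        exact re_le_norm _
    _ ≤ Real.exp (Real.pi * Real.cosh (R + 1 + Real.pi + 512 / (1 - r))) := by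
        gcongr
        exact (norm_cosh_le_cosh_re _).trans (Real.cosh_le_cosh.2 (hre.trans (le_abs_self _)))

theorem schottky (R : ℝ) {r : ℝ} (hr : r < 1) :
    ∃ C, ∀ h : ℂ → ℂ, DifferentiableOn ℂ h (ball 0 1) →
      (∀ z ∈ ball (0 : ℂ) 1, h z ≠ 0 ∧ h z ≠ 1) → ‖h 0‖ ≤ R →
      ∀ z ∈ closedBall (0 : ℂ) r, ‖h z‖ ≤ C := by
  set B := Real.exp (Real.pi * Real.cosh (R + 1 + 1 + Real.pi + 512 / (1 - r)))
  refine ⟨1 + B, fun h hh hh01 hR z hz ↦ ?_⟩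
  rcases le_total (1 / 2) ‖h 0‖ with hlarge | hsmall
  · linarith [norm_le_of_omits_zero_one_of_half_le hh hh01 (R := R + 1)
      ⟨hlarge, by linarith⟩ hr hz]
  · have hlo : 1 / 2 ≤ ‖1 - h 0‖ := by
      linarith [norm_sub_norm_le 1 (h 0), norm_one (α := ℂ)]
    have hhi : ‖1 - h 0‖ ≤ R + 1 := by
      linarith [norm_sub_le 1 (h 0), norm_one (α := ℂ)]
    have hbound := norm_le_of_omits_zero_one_of_half_le (hh.const_sub 1)
      (fun z hz ↦ ⟨sub_ne_zero.2 (hh01 z hz).2.symm, by simpa using (hh01 z hz).1⟩)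
      ⟨hlo, hhi⟩ hr hz
    calc ‖h z‖ = ‖1 - (1 - h z)‖ := by rw [sub_sub_cancel]
      _ ≤ ‖(1 : ℂ)‖ + ‖1 - h z‖ := norm_sub_le _ _
      _ ≤ 1 + B := by rw [norm_one]; gcongr

theorem schottky_of_separated_omitted_values {E : Type*} [NormedAddCommGroup E] [NormedSpace ℂ E]
    (A R : ℝ) {δ : ℝ} (hδ : 0 < δ) :
    ∃ C, ∀ (f : E → ℂ) (a b : ℂ) (w : E) (ρ : ℝ), DifferentiableOn ℂ f (ball w ρ) →
      (∀ z ∈ ball w ρ, f z ≠ a ∧ f z ≠ b) → ‖a‖ ≤ A → ‖b‖ ≤ A → δ ≤ dist a b → ‖f w‖ ≤ R →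
      ∀ z ∈ ball w (ρ / 2), ‖f z‖ ≤ C := by
  obtain ⟨C, hC⟩ := schottky ((R + A) / δ) one_half_lt_one
  refine ⟨A + (A + A) * C, fun f a b w ρ hf hfab ha hb hab hR z hz ↦ ?_⟩
  have hA : 0 ≤ A := (norm_nonneg a).trans ha
  have hba : b - a ≠ 0 := sub_ne_zero.2 (dist_pos.1 (hδ.trans_le hab)).symm
  -- The slice of `f` along the complex line from `w` to `z`, which lies at parameter `1 / 2`.
  set line : ℂ → E := fun ζ ↦ w + ζ • (2 : ℂ) • (z - w)
  have hline : Set.MapsTo line (ball 0 1) (ball w ρ) := by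
    intro ζ hζ
    rw [mem_ball_iff_norm] at hz ⊢
    rw [mem_ball_zero_iff] at hζ
    rw [add_sub_cancel_left, norm_smul, norm_smul, norm_ofNat]
    nlinarith [norm_nonneg (z - w)]
  have hline0 : line 0 = w := by simp [line]
  have hlinez : line (1 / 2) = z := by simp [line, smul_smul]
  have hbound := hC (fun ζ ↦ (f (line ζ) - a) / (b - a))
    (((hf.comp (by fun_prop) hline).sub_const a).div_const (b - a))
    (fun ζ hζ ↦ ⟨div_ne_zero (sub_ne_zero.2 (hfab _ (hline hζ)).1) hba, fun h1 ↦
      (hfab _ (hline hζ)).2 (sub_left_injective ((div_eq_one_iff_eq hba).1 h1))⟩)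
    (by
      rw [hline0, norm_div, ← dist_eq_norm b, dist_comm b]
      gcongr
      · linarith [norm_nonneg (f w)]
      · linarith [norm_sub_le (f w) a])
    (1 / 2) (by simp)
  rw [hlinez] at hbound
  calc ‖f z‖ = ‖a + (b - a) * ((f z - a) / (b - a))‖ := by
        rw [mul_div_cancel₀ _ hba, add_sub_cancel]
    _ ≤ ‖a‖ + ‖b - a‖ * ‖(f z - a) / (b - a)‖ := by
        rw [← norm_mul]
        exact norm_add_le _ _
    _ ≤ A + (A + A) * C := by
        gcongr
        linarith [norm_sub_le b a]

end Schottky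

section Chordal

theorem one_le_sqrt_one_add_sq (x : ℝ) : 1 ≤ √(1 + x ^ 2) :=
  Real.one_le_sqrt.2 (by linarith [sq_nonneg x])

theorem chordalInf_nonneg (a : ℂ) : 0 ≤ chordalInf a := by
  unfold chordalInf
  positivity

theorem chordalInf_le_one (a : ℂ) : chordalInf a ≤ 1 :=
  div_le_one_of_le₀ (one_le_sqrt_one_add_sq _) (Real.sqrt_nonneg _)

theorem norm_mul_chordalInf_le_one (a : ℂ) : ‖a‖ * chordalInf a ≤ 1 := by
  rw [chordalInf, mul_one_div]
  exact div_le_one_of_le₀ (Real.le_sqrt_of_sq_le (by linarith)) (Real.sqrt_nonneg _)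

theorem chordal_nonneg (a b : ℂ) : 0 ≤ chordal a b := by
  unfold chordal
  positivity

theorem chordal_comm (a b : ℂ) : chordal a b = chordal b a := by
  rw [chordal, chordal, dist_comm, mul_comm √_]

theorem chordal_le_dist (a b : ℂ) : chordal a b ≤ dist a b :=
  div_le_self dist_nonneg
    (one_le_mul_of_one_le_of_one_le (one_le_sqrt_one_add_sq _) (one_le_sqrt_one_add_sq _))

theorem chordal_le_one (a b : ℂ) : chordal a b ≤ 1 := by
  refine div_le_one_of_le₀ ?_ (by positivity)
  rw [← Real.sqrt_mul (by positivity)]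
  refine (dist_le_norm_add_norm a b).trans (Real.le_sqrt_of_sq_le ?_)
  nlinarith [sq_nonneg (‖a‖ * ‖b‖ - 1)]

variable {ε : ℝ} {a b : ℂ}

theorem le_dist_of_lt_chordal_prod (h : ε < chordalInf a * chordal a b * chordalInf b) :
    ε ≤ dist a b :=
  calc ε ≤ chordalInf a * chordal a b * chordalInf b := h.le
    _ ≤ 1 * dist a b * 1 := by
        gcongr
        · exact chordalInf_nonneg b
        · exact chordal_nonneg a b
        · exact chordalInf_le_one a
        · exact chordal_le_dist a b
        · exact chordalInf_le_one b
    _ = dist a b := by rw [one_mul, mul_one]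

theorem norm_le_of_lt_chordal_prod (hε : 0 < ε)
    (h : ε < chordalInf a * chordal a b * chordalInf b) : ‖a‖ ≤ 1 / ε := by
  rw [le_div_iff₀ hε]
  calc ‖a‖ * ε ≤ ‖a‖ * (chordalInf a * chordal a b * chordalInf b) := by gcongr
    _ = ‖a‖ * chordalInf a * (chordal a b * chordalInf b) := by ring
    _ ≤ 1 * (1 * 1) := by
        gcongr
        · exact mul_nonneg (chordal_nonneg a b) (chordalInf_nonneg b)
        · exact norm_mul_chordalInf_le_one a
        · exact chordalInf_nonneg b
        · exact chordal_le_one a b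
        · exact chordalInf_le_one b
    _ = 1 := by norm_num

theorem norm_le_of_lt_chordal_prod' (hε : 0 < ε)
    (h : ε < chordalInf a * chordal a b * chordalInf b) : ‖b‖ ≤ 1 / ε := by
  refine norm_le_of_lt_chordal_prod hε (b := a) ?_
  rw [chordal_comm b a]
  linarith

end Chordal

section Montel

open Metric

theorem exists_tendstoLocallyUniformly_of_equicontinuous {X α : Type*} [TopologicalSpace X]
    [WeaklyLocallyCompactSpace X] [SigmaCompactSpace X] [MetricSpace α] {f : ℕ → X → α}
    (hf : Equicontinuous f) (hcompact : ∀ x, ∃ K, IsCompact K ∧ ∀ n, f n x ∈ K) :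
    ∃ φ : ℕ → ℕ, StrictMono φ ∧ ∃ g, TendstoLocallyUniformly (fun n ↦ f (φ n)) g atTop := by
  choose K hK hfK using hcompact
  set T : Set (X → α) := closure (Set.range f)
  have hT : IsCompact T := (isCompact_univ_pi hK).closure_of_subset
    (Set.range_subset_iff.2 fun n x _ ↦ hfK x n)
  have hTeq : T.Equicontinuous := Set.Equicontinuous.closure (equicontinuous_iff_range.1 hf)
  have hTcont : ∀ g ∈ T, Continuous g := fun g hg ↦ hTeq.continuous ⟨g, hg⟩
  set S : Set C(X, α) := {g | ⇑g ∈ T}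
  have hS : IsCompact S := by
    refine ArzelaAscoli.isCompact_of_equicontinuous S ?_
      (hTeq.comp fun g : S ↦ (⟨g, g.2⟩ : T))
    convert hT using 1
    exact Set.image_preimage_eq_of_subset fun g hg ↦ ⟨⟨g, hTcont g hg⟩, rfl⟩
  have hfT : ∀ n, f n ∈ T := fun n ↦ subset_closure (Set.mem_range_self n)
  obtain ⟨g, -, φ, hφ, hlim⟩ := hS.tendsto_subseq
    (x := fun n ↦ (⟨f n, hTcont _ (hfT n)⟩ : C(X, α))) hfT
  exact ⟨φ, hφ, g, ContinuousMap.tendsto_iff_tendstoLocallyUniformly.1 hlim⟩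

variable {ι E G : Type*} [NormedAddCommGroup E] [NormedSpace ℂ E] [NormedAddCommGroup G]
  [NormedSpace ℂ G]

theorem equicontinuousAt_of_forall_norm_le {f : ι → E → G} {x : E} {U : Set E} (hU : U ∈ 𝓝 x)
    (hf : ∀ i, DifferentiableOn ℂ (f i) U) {M : ℝ} (hM : ∀ i, ∀ z ∈ U, ‖f i z‖ ≤ M) :
    EquicontinuousAt f x := by
  obtain ⟨r, hr, hrU⟩ := Metric.mem_nhds_iff.1 hU
  have hmaps : ∀ i, Set.MapsTo (f i) (ball x r) (closedBall (f i x) (M + M)) := fun i z hz ↦ by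
    rw [mem_closedBall]
    exact (dist_le_norm_add_norm _ _).trans
      (add_le_add (hM i z (hrU hz)) (hM i x (mem_of_mem_nhds hU)))
  refine equicontinuousAt_of_continuity_modulus (fun z ↦ (M + M) / r * dist z x) ?_ f ?_
  · exact Continuous.tendsto' (by fun_prop) _ _ (by simp)
  · filter_upwards [ball_mem_nhds x hr] with z hz i
    rw [dist_comm]
    exact Complex.dist_le_div_mul_dist_of_mapsTo_ball ((hf i).mono hrU) (hmaps i) hz

theorem uniformCauchySeqOn_fderiv_of_thickening {l : Filter ι} {f : ι → E → G} {s : Set E} {δ : ℝ}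
    (hδ : 0 < δ) (hf : ∀ i, DifferentiableOn ℂ (f i) (thickening δ s))
    (hcauchy : UniformCauchySeqOn f l (thickening δ s)) :
    UniformCauchySeqOn (fun i ↦ fderiv ℂ (f i)) l s := by
  intro u hu
  obtain ⟨η, hη, hηu⟩ := mem_uniformity_dist.1 hu
  filter_upwards [hcauchy _ (dist_mem_uniformity (show 0 < η * δ / 4 by positivity))]
    with ⟨i, j⟩ hij y hy
  have hsub : ball y δ ⊆ thickening δ s := ball_subset_thickening hy δ
  have hmaps : Set.MapsTo (f i - f j) (ball y δ) (closedBall ((f i - f j) y) (η * δ / 2)) := by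
    intro z hz
    have hz' : dist (f i z) (f j z) < η * δ / 4 := hij z (hsub hz)
    have hy' : dist (f i y) (f j y) < η * δ / 4 := hij y (hsub (mem_ball_self hδ))
    rw [dist_eq_norm] at hz' hy'
    rw [mem_closedBall, Pi.sub_apply, Pi.sub_apply]
    linarith [dist_le_norm_add_norm (f i z - f j z) (f i y - f j y)]
  have hdiff : ∀ i, DifferentiableAt ℂ (f i) y := fun i ↦
    ((hf i).mono hsub).differentiableAt (ball_mem_nhds y hδ)
  refine hηu ?_
  calc dist (fderiv ℂ (f i) y) (fderiv ℂ (f j) y) = ‖fderiv ℂ (f i - f j) y‖ := by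
        rw [dist_eq_norm, fderiv_sub (hdiff i) (hdiff j)]
    _ ≤ η * δ / 2 / δ := Complex.norm_fderiv_le_div_of_mapsTo_ball
        (((hf i).mono hsub).sub ((hf j).mono hsub)) hmaps hδ
    _ = η / 2 := by field_simp
    _ < η := half_lt_self hη

theorem differentiableOn_of_tendstoLocallyUniformlyOn [ProperSpace E] [CompleteSpace G]
    {l : Filter ι} [l.NeBot] {Ω : Set E} (hΩ : IsOpen Ω) {f : ι → E → G} {g : E → G}
    (hf : ∀ i, DifferentiableOn ℂ (f i) Ω) (hlim : TendstoLocallyUniformlyOn f g l Ω) :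
    DifferentiableOn ℂ g Ω := by
  intro x hx
  obtain ⟨K, ⟨hxK, hK⟩, hKΩ⟩ := (compact_basis_nhds x).mem_iff.1 (hΩ.mem_nhds hx)
  obtain ⟨δ, hδ, hδΩ⟩ := hK.exists_cthickening_subset_open hΩ hKΩ
  have hunif : TendstoUniformlyOn f g l (thickening δ K) :=
    ((tendstoLocallyUniformlyOn_iff_forall_isCompact hΩ).1 hlim _ hδΩ hK.cthickening).mono
      (thickening_subset_cthickening δ K)
  have hcauchy : UniformCauchySeqOn (fun i ↦ fderiv ℂ (f i)) l K :=
    uniformCauchySeqOn_fderiv_of_thickening hδ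
      (fun i ↦ (hf i).mono ((thickening_subset_cthickening δ K).trans hδΩ))
      hunif.uniformCauchySeqOn
  have hconv : ∀ y ∈ K, ∃ L, Tendsto (fun i ↦ fderiv ℂ (f i) y) l (𝓝 L) := fun y hy ↦
    cauchy_map_iff_exists_tendsto.1 (hcauchy.cauchy_map hy)
  choose! g' hg' using hconv
  have hderiv : HasFDerivAt g (g' x) x :=
    hasFDerivAt_of_tendstoUniformlyOn isOpen_interior
      ((hcauchy.tendstoUniformlyOn_of_tendsto hg').mono interior_subset)
      (fun i y hy ↦
        ((hf i).differentiableAt (hΩ.mem_nhds (hKΩ (interior_subset hy)))).hasFDerivAt)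
      (fun y hy ↦ hlim.tendsto_at (hKΩ (interior_subset hy))) (mem_interior_iff_mem_nhds.2 hxK)
  exact hderiv.differentiableAt.differentiableWithinAt

theorem montel [ProperSpace E] [ProperSpace G] {Ω : Set E} (hΩ : IsOpen Ω) {f : ℕ → E → G}
    (hf : ∀ n, DifferentiableOn ℂ (f n) Ω)
    (hbdd : ∀ z ∈ Ω, ∃ U ∈ 𝓝 z, ∃ M : ℝ, ∀ n, ∀ w ∈ U, ‖f n w‖ ≤ M) :
    ∃ φ : ℕ → ℕ, StrictMono φ ∧ ∃ g : E → G, DifferentiableOn ℂ g Ω ∧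
      TendstoLocallyUniformlyOn (fun n ↦ f (φ n)) g atTop Ω := by
  have : LocallyCompactSpace Ω := hΩ.locallyCompactSpace
  have hequi : EquicontinuousOn f Ω := by
    intro z hz
    obtain ⟨U, hU, M, hM⟩ := hbdd z hz
    exact (equicontinuousAt_of_forall_norm_le (inter_mem hU (hΩ.mem_nhds hz))
      (fun n ↦ (hf n).mono Set.inter_subset_right)
      fun n w hw ↦ hM n w hw.1).equicontinuousWithinAt Ω
  have hcompact : ∀ z : Ω, ∃ K, IsCompact K ∧ ∀ n, f n z ∈ K := by
    intro z
    obtain ⟨U, hU, M, hM⟩ := hbdd z z.2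
    exact ⟨closedBall 0 M, isCompact_closedBall 0 M, fun n ↦
      mem_closedBall_zero_iff.2 (hM n z (mem_of_mem_nhds hU))⟩
  obtain ⟨φ, hφ, g, hg⟩ := exists_tendstoLocallyUniformly_of_equicontinuous
    (equicontinuous_restrict_iff f |>.2 hequi) hcompact
  have hlim : TendstoLocallyUniformlyOn (fun n ↦ f (φ n)) (Function.extend Subtype.val g 0)
      atTop Ω := by
    rw [tendstoLocallyUniformlyOn_iff_tendstoLocallyUniformly_comp_coe,
      Function.extend_comp Subtype.val_injective]
    exact hg
  exact ⟨φ, hφ, _, differentiableOn_of_tendstoLocallyUniformlyOn hΩ (fun n ↦ hf _) hlim, hlim⟩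

end Montel

section Harnack

open Metric

/-- A Harnack-type principle for the family `F` on `Ω`: every point of `Ω` has a neighbourhood on
which a bound for `‖f‖` at one point gives a bound at any other point, uniformly in `f ∈ F`. It
propagates along connected sets, and so reduces normality of `F` to the behaviour of the values of
a sequence at a single point. -/
def IsHarnackFamily {X G : Type*} [TopologicalSpace X] [Norm G] (Ω : Set X) (F : Set (X → G)) :
    Prop :=
  ∀ z ∈ Ω, ∃ U ∈ 𝓝 z, ∀ R : ℝ, ∃ C : ℝ, ∀ f ∈ F, ∀ x ∈ U, ∀ y ∈ U, ‖f x‖ ≤ R → ‖f y‖ ≤ C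

namespace IsHarnackFamily

section Topological

variable {X G : Type*} [TopologicalSpace X] [Norm G] {Ω : Set X} {F : Set (X → G)} {x y : X}

theorem exists_norm_le (hF : IsHarnackFamily Ω F) (hΩ : IsPreconnected Ω) (hx : x ∈ Ω)
    (hy : y ∈ Ω) (R : ℝ) : ∃ C : ℝ, ∀ f ∈ F, ‖f x‖ ≤ R → ‖f y‖ ≤ C := by
  refine hΩ.induction₂' (fun x y ↦ ∀ R : ℝ, ∃ C : ℝ, ∀ f ∈ F, ‖f x‖ ≤ R → ‖f y‖ ≤ C) ?_ ?_ hx hy R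
  · intro z hz
    obtain ⟨U, hU, hUF⟩ := hF z hz
    have hzU := mem_of_mem_nhds hU
    filter_upwards [mem_nhdsWithin_of_mem_nhds hU] with w hw
    exact ⟨fun R ↦ (hUF R).imp fun C hC f hf ↦ hC f hf z hzU w hw,
      fun R ↦ (hUF R).imp fun C hC f hf ↦ hC f hf w hw z hzU⟩
  · intro u v w _ _ _ huv hvw R
    obtain ⟨C, hC⟩ := huv R
    obtain ⟨D, hD⟩ := hvw C
    exact ⟨D, fun f hf hu ↦ hD f hf (hC f hf hu)⟩

theorem exists_mem_nhds_norm_le (hF : IsHarnackFamily Ω F) (hΩ : IsPreconnected Ω) (hx : x ∈ Ω)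
    (hy : y ∈ Ω) (R : ℝ) :
    ∃ U ∈ 𝓝 y, ∃ C : ℝ, ∀ f ∈ F, ‖f x‖ ≤ R → ∀ w ∈ U, ‖f w‖ ≤ C := by
  obtain ⟨U, hU, hUF⟩ := hF y hy
  obtain ⟨C, hC⟩ := hF.exists_norm_le hΩ hx hy R
  obtain ⟨D, hD⟩ := hUF C
  exact ⟨U, hU, D, fun f hf hfx w hw ↦ hD f hf y (mem_of_mem_nhds hU) w hw (hC f hf hfx)⟩

theorem exists_norm_le_of_isCompact (hF : IsHarnackFamily Ω F) (hΩ : IsPreconnected Ω)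
    (hx : x ∈ Ω) {K : Set X} (hK : IsCompact K) (hKΩ : K ⊆ Ω) (R : ℝ) :
    ∃ C : ℝ, ∀ f ∈ F, ∀ w ∈ K, ‖f w‖ ≤ R → ‖f x‖ ≤ C := by
  refine hK.induction_on (p := fun K ↦ ∃ C : ℝ, ∀ f ∈ F, ∀ w ∈ K, ‖f w‖ ≤ R → ‖f x‖ ≤ C) ?_ ?_ ?_ ?_
  · simp only [Set.mem_empty_iff_false, false_imp_iff, implies_true, exists_const]
  · rintro s t hst ⟨C, hC⟩
    exact ⟨C, fun f hf w hw ↦ hC f hf w (hst hw)⟩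
  · rintro s t ⟨C, hC⟩ ⟨D, hD⟩
    exact ⟨max C D, fun f hf w hw hR ↦ hw.elim (fun h ↦ (hC f hf w h hR).trans (le_max_left C D))
      fun h ↦ (hD f hf w h hR).trans (le_max_right C D)⟩
  · intro y hy
    obtain ⟨U, hU, hUF⟩ := hF y (hKΩ hy)
    obtain ⟨C, hC⟩ := hUF R
    obtain ⟨D, hD⟩ := hF.exists_norm_le hΩ (hKΩ hy) hx C
    exact ⟨U, mem_nhdsWithin_of_mem_nhds hU, D, fun f hf w hw hR ↦
      hD f hf (hC f hf w hw y (mem_of_mem_nhds hU) hR)⟩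

theorem eventually_forall_lt_norm (hF : IsHarnackFamily Ω F) (hΩ : IsPreconnected Ω) (hx : x ∈ Ω)
    {ι : Type*} {l : Filter ι} {f : ι → X → G} (hf : ∀ i, f i ∈ F)
    (hlim : Tendsto (fun i ↦ ‖f i x‖) l atTop) {K : Set X} (hK : IsCompact K) (hKΩ : K ⊆ Ω)
    (M : ℝ) : ∀ᶠ i in l, ∀ z ∈ K, M < ‖f i z‖ := by
  obtain ⟨C, hC⟩ := hF.exists_norm_le_of_isCompact hΩ hx hK hKΩ M
  filter_upwards [hlim.eventually_gt_atTop C] with i hi z hz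
  exact lt_of_not_ge fun hle ↦ hi.not_ge (hC (f i) (hf i) z hz hle)

end Topological

theorem exists_subseq_tendstoLocallyUniformlyOn {E G : Type*} [NormedAddCommGroup E]
    [NormedSpace ℂ E] [ProperSpace E] [NormedAddCommGroup G] [NormedSpace ℂ G] [ProperSpace G]
    {Ω : Set E} {F : Set (E → G)} (hF : IsHarnackFamily Ω F) (hΩ : IsOpen Ω)
    (hconn : IsPreconnected Ω) (hhol : ∀ f ∈ F, DifferentiableOn ℂ f Ω) {x : E} (hx : x ∈ Ω)
    {f : ℕ → E → G} (hf : ∀ n, f n ∈ F) {R : ℝ} (hR : ∃ᶠ n in atTop, ‖f n x‖ ≤ R) :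
    ∃ φ : ℕ → ℕ, StrictMono φ ∧ ∃ g : E → G, DifferentiableOn ℂ g Ω ∧
      TendstoLocallyUniformlyOn (fun n ↦ f (φ n)) g atTop Ω := by
  obtain ⟨ψ, hψ, hψR⟩ := extraction_of_frequently_atTop hR
  obtain ⟨φ, hφ, hlim⟩ := montel hΩ (f := fun n ↦ f (ψ n)) (fun n ↦ hhol _ (hf _)) fun z hz ↦ by
    obtain ⟨U, hU, C, hC⟩ := hF.exists_mem_nhds_norm_le hconn hx hz R
    exact ⟨U, hU, C, fun n ↦ hC _ (hf _) (hψR n)⟩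
  exact ⟨ψ ∘ φ, hψ.comp hφ, hlim⟩

theorem isNormalFamily {E : Type} [NormedAddCommGroup E] [NormedSpace ℂ E] [ProperSpace E]
    {Ω : Set E} {F : Set (E → ℂ)} (hF : IsHarnackFamily Ω F) (hΩ : IsOpen Ω)
    (hconn : IsPreconnected Ω) (hhol : ∀ f ∈ F, DifferentiableOn ℂ f Ω) : IsNormalFamily Ω F := by
  intro s hs
  rcases Ω.eq_empty_or_nonempty with rfl | ⟨x, hx⟩
  · exact ⟨id, strictMono_id, .inl ⟨0, differentiableOn_empty, fun K hK _ η _ ↦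
      ⟨0, fun _ _ z hz ↦ (hK hz).elim⟩⟩⟩
  by_cases hbdd : ∃ R : ℝ, ∃ᶠ n in atTop, ‖s n x‖ ≤ R
  · obtain ⟨R, hR⟩ := hbdd
    obtain ⟨φ, hφ, g, hg, hlim⟩ :=
      hF.exists_subseq_tendstoLocallyUniformlyOn hΩ hconn hhol hx hs hR
    refine ⟨φ, hφ, .inl ⟨g, hg, fun K hKΩ hK η hη ↦ eventually_atTop.1 ?_⟩⟩
    have hunif := (tendstoLocallyUniformlyOn_iff_forall_isCompact hΩ).1 hlim K hKΩ hK
    filter_upwards [Metric.tendstoUniformlyOn_iff.1 hunif η hη] with n hn z hz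
    exact (chordal_le_dist _ _).trans_lt (by rw [dist_comm]; exact hn z hz)
  · have hlim : Tendsto (fun n ↦ ‖s n x‖) atTop atTop :=
      tendsto_atTop.2 fun R ↦ (not_frequently.1 (not_exists.1 hbdd R)).mono fun n hn ↦
        (not_le.1 hn).le
    exact ⟨id, strictMono_id, .inr fun K hKΩ hK M ↦
      eventually_atTop.1 (hF.eventually_forall_lt_norm hconn hx hs hlim hK hKΩ M)⟩

end IsHarnackFamily

theorem isHarnackFamily_of_lt_chordal_prod {E : Type*} [NormedAddCommGroup E] [NormedSpace ℂ E]
    {Ω : Set E} (hΩ : IsOpen Ω) {F : Set (E → ℂ)} (hhol : ∀ f ∈ F, DifferentiableOn ℂ f Ω) {ε : ℝ}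
    (hε : 0 < ε) (hF : ∀ f ∈ F, ∃ a b : ℂ, (∀ z ∈ Ω, f z ≠ a ∧ f z ≠ b) ∧
      ε < chordalInf a * chordal a b * chordalInf b) :
    IsHarnackFamily Ω F := by
  intro z hz
  obtain ⟨ρ, hρ, hρΩ⟩ := Metric.isOpen_iff.1 hΩ z hz
  refine ⟨ball z (ρ / 8), ball_mem_nhds z (by linarith), fun R ↦ ?_⟩
  obtain ⟨C, hC⟩ := schottky_of_separated_omitted_values (E := E) (1 / ε) R hε
  refine ⟨C, fun f hf x hx y hy hfx ↦ ?_⟩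
  obtain ⟨a, b, hfab, hab⟩ := hF f hf
  rw [mem_ball] at hx
  rw [mem_ball'] at hy
  have hsub : ball x (ρ / 2) ⊆ Ω := (ball_subset_ball' (by linarith)).trans hρΩ
  refine hC f a b x (ρ / 2) ((hhol f hf).mono hsub) (fun w hw ↦ hfab w (hsub hw))
    (norm_le_of_lt_chordal_prod hε hab) (norm_le_of_lt_chordal_prod' hε hab)
    (le_dist_of_lt_chordal_prod hab) hfx y ?_
  rw [mem_ball']
  linarith [dist_triangle x z y]

end Harnack

theorem stmt8_general {E : Type} [NormedAddCommGroup E] [NormedSpace ℂ E] [FiniteDimensional ℂ E]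
    {Ω : Set E} (hΩ : IsOpen Ω) (hconn : IsPreconnected Ω) (F : Set (E → ℂ))
    (hhol : ∀ f ∈ F, DifferentiableOn ℂ f Ω) (ε : ℝ) (hε : 0 < ε)
    (h : ∀ f ∈ F, ∃ a b : ℂ, (∀ z ∈ Ω, f z ≠ a ∧ f z ≠ b) ∧
      ε < chordalInf a * chordal a b * chordalInf b) :
    IsNormalFamily Ω F := by
  have : ProperSpace E := FiniteDimensional.proper ℂ E
  exact (isHarnackFamily_of_lt_chordal_prod hΩ hhol hε h).isNormalFamily hΩ hconn hhol

/-- Carathéodory's normality theorem in ℂⁿ. -/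
theorem stmt8 {n : ℕ} {Ω : Set (Cn n)} (hΩ : IsOpen Ω) (hconn : IsConnected Ω)
    (F : Set (Cn n → ℂ)) (hhol : ∀ f ∈ F, DifferentiableOn ℂ f Ω)
    (ε : ℝ) (hε : 0 < ε)
    (h : ∀ f ∈ F, ∃ a b : ℂ, a ≠ b ∧ (∀ z ∈ Ω, f z ≠ a ∧ f z ≠ b) ∧
      ε < chordalInf a * chordal a b * chordalInf b) :
    IsNormalFamily Ω F :=
  stmt8_general hΩ hconn.isPreconnected F hhol ε hε fun f hf ↦
    let ⟨a, b, _, hab⟩ := h f hf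
    ⟨a, b, hab⟩
end

section
/- Nevanlinna's theorem on totally ramified values: a nonconstant entire function g : ℂ → ℂ has at most two finite totally ramified values, where a ∈ ℂ is totally ramified for g if every root of the equation g(λ) = a has multiplicity at least 2 (in particular, omitted values are totally ramified). -/
open Filter Topology

/-!
Suppose that `g` is totally ramified over the zeros of a separable polynomial `P` of degree at
least three. Then `F := g'² / P(g)` is entire: the quadratic differential `dw² / P(w)` pulls back
under `g` to the holomorphic differential `F dz²`. Rescaling about almost maximal points of the
metric `|F| (1 + |g|²)^β |dz|²`, where `0 < β` and `2β + 2 < deg P`, yields such pairs whose density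
is `1` at the origin and at most `4` on an arbitrarily large disc. If `g 0` is large, then `|g| > 1`
on a disc of fixed radius, so `log |g|` is a positive harmonic function there and
`g'(0) = O(|g 0| log |g 0|)`, which is too small for `g'² = F P(g)`. If `g 0` is bounded, then the
Schwarz lemma keeps `F` away from `0` on a large disc, so `g` is bounded there, and Cauchy's
estimates make both `P (g 0)` and `P' (g 0)` arbitrarily small, contradicting separability.
-/

open Polynomial

section Division

variable {𝕜 : Type*} [NontriviallyNormedField 𝕜] {f u : 𝕜 → 𝕜}

lemma exists_analyticAt_eventuallyEq_mul_of_analyticOrderAt_le {x : 𝕜}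
    (hf : AnalyticAt 𝕜 f x) (hu : AnalyticAt 𝕜 u x) (hu_top : analyticOrderAt u x ≠ ⊤)
    (hle : analyticOrderAt u x ≤ analyticOrderAt f x) :
    ∃ ψ : 𝕜 → 𝕜, AnalyticAt 𝕜 ψ x ∧ f =ᶠ[𝓝 x] ψ * u := by
  obtain ⟨h, hh, hhx, hu_eq⟩ := hu.analyticOrderAt_ne_top.1 hu_top
  rw [← ENat.natCast_toNat hu_top] at hle
  obtain ⟨k, hk, hf_eq⟩ := (natCast_le_analyticOrderAt hf).1 hle
  refine ⟨k / h, hk.div hh hhx, ?_⟩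
  filter_upwards [hf_eq, hu_eq, hh.continuousAt.eventually_ne hhx] with z hfz huz hhz
  simp only [hfz, huz, smul_eq_mul, Pi.mul_apply, Pi.div_apply, analyticOrderNatAt]
  field_simp

/-- The quotients are glued pointwise: two of them agree near a common point away from the zeros
of `u`, hence everywhere near it by continuity. -/
lemma exists_analyticOnNhd_eq_mul_of_analyticOrderAt_le [CompleteSpace 𝕜]
    (hf : AnalyticOnNhd 𝕜 f Set.univ) (hu : AnalyticOnNhd 𝕜 u Set.univ)
    (hu_top : ∀ x, analyticOrderAt u x ≠ ⊤)
    (hle : ∀ x, analyticOrderAt u x ≤ analyticOrderAt f x) :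
    ∃ F : 𝕜 → 𝕜, AnalyticOnNhd 𝕜 F Set.univ ∧ f = F * u := by
  choose ψ hψ hfψ using fun x ↦ exists_analyticAt_eventuallyEq_mul_of_analyticOrderAt_le
    (hf x trivial) (hu x trivial) (hu_top x) (hle x)
  have hu_ne (x) : ∀ᶠ z in 𝓝[≠] x, u z ≠ 0 :=
    (hu x trivial).eventually_eq_zero_or_eventually_ne_zero.resolve_left
      fun h ↦ hu_top x (analyticOrderAt_eq_top.2 h)
  have hglue (x) : (fun y ↦ ψ y y) =ᶠ[𝓝 x] ψ x := by
    filter_upwards [(hfψ x).eventuallyEq_nhds, (hψ x).eventually_analyticAt] with y hy hψy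
    have hne : ψ y =ᶠ[𝓝[≠] y] ψ x := by
      filter_upwards [(hfψ y).filter_mono nhdsWithin_le_nhds, hy.filter_mono nhdsWithin_le_nhds,
        hu_ne y] with z hz₁ hz₂ huz
      exact mul_right_cancel₀ huz (hz₁.symm.trans hz₂)
    exact ((hψ y).continuousAt.eventuallyEq_nhds_iff_eventuallyEq_nhdsNE
      hψy.continuousAt).1 hne |>.eq_of_nhds
  exact ⟨fun y ↦ ψ y y, fun x _ ↦ (hψ x).congr (hglue x).symm, funext fun x ↦ (hfψ x).eq_of_nhds⟩

lemma analyticOrderAt_eval_comp_le_sq_deriv [CharZero 𝕜] [CompleteSpace 𝕜] {P : 𝕜[X]} {g : 𝕜 → 𝕜}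
    {x : 𝕜} (hg : AnalyticAt 𝕜 g x) (hP : P.Separable)
    (hram : P.IsRoot (g x) → deriv g x = 0) :
    analyticOrderAt (fun z ↦ P.eval (g z)) x ≤ analyticOrderAt (deriv g ^ 2) x := by
  have hPg : AnalyticAt 𝕜 (fun z ↦ P.eval (g z)) x := hg.aeval_polynomial P
  by_cases hroot : P.IsRoot (g x)
  swap
  · simp [hPg.analyticOrderAt_eq_zero.2 hroot]
  have hP' : P.derivative.eval (g x) ≠ 0 := by
    simpa using hP.eval₂_derivative_ne_zero (RingHom.id 𝕜) hroot
  have hderiv : deriv (fun z ↦ P.eval (g z)) =ᶠ[𝓝 x]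
      (fun z ↦ P.derivative.eval (g z)) * deriv g := by
    filter_upwards [hg.eventually_analyticAt] with z hz
    exact ((P.hasDerivAt _).comp z hz.differentiableAt.hasDerivAt).deriv
  have hP'g : AnalyticAt 𝕜 (fun z ↦ P.derivative.eval (g z)) x := hg.aeval_polynomial _
  have hpos : 1 ≤ analyticOrderAt (deriv g) x :=
    Order.one_le_iff_ne_zero.2 fun h ↦ hg.deriv.analyticOrderAt_eq_zero.1 h (hram hroot)
  calc analyticOrderAt (fun z ↦ P.eval (g z)) x
      = analyticOrderAt (deriv fun z ↦ P.eval (g z)) x + 1 := by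
        simpa [hroot.eq_zero] using hPg.analyticOrderAt_deriv_add_one.symm
    _ = analyticOrderAt (deriv g) x + 1 := by
        rw [analyticOrderAt_congr hderiv, analyticOrderAt_mul hP'g hg.deriv,
          hP'g.analyticOrderAt_eq_zero.2 hP', zero_add]
    _ ≤ analyticOrderAt (deriv g) x + analyticOrderAt (deriv g) x := by gcongr
    _ = analyticOrderAt (deriv g ^ 2) x := by
        rw [analyticOrderAt_pow hg.deriv, two_nsmul]

end Division

section Logarithm

open Metric

variable {c : ℂ} {r : ℝ}

lemma norm_deriv_le_of_re_pos {f : ℂ → ℂ} (hr : 0 < r) (hf : DifferentiableOn ℂ f (ball c r))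
    (hpos : ∀ z ∈ ball c r, 0 < (f z).re) :
    ‖deriv f c‖ ≤ 2 * Real.exp 1 * (f c).re / r := by
  have hc : c ∈ ball c r := mem_ball_self hr
  set x := (f c).re
  have hx : 0 < x := hpos c hc
  set φ : ℂ → ℂ := fun z ↦ Complex.exp (-f z / x)
  have hφ_norm (z) : ‖φ z‖ = Real.exp (-(f z).re / x) := by
    rw [Complex.norm_exp, Complex.div_ofReal_re, Complex.neg_re]
  have hφ_le {z} (hz : z ∈ ball c r) : ‖φ z‖ ≤ 1 := by
    rw [hφ_norm, Real.exp_le_one_iff]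
    exact div_nonpos_of_nonpos_of_nonneg (neg_nonpos.2 (hpos z hz).le) hx.le
  have hφ_maps : Set.MapsTo φ (ball c r) (closedBall (φ c) 2) := fun z hz ↦ by
    rw [mem_closedBall]
    linarith [dist_le_norm_add_norm (φ z) (φ c), hφ_le hz, hφ_le hc]
  have hφ_deriv : deriv φ c = φ c * (-deriv f c / x) :=
    ((hf.differentiableAt (ball_mem_nhds c hr)).hasDerivAt.neg.div_const (x : ℂ)).cexp.deriv
  have hφ_le_div : ‖deriv φ c‖ ≤ 2 / r :=
    Complex.norm_deriv_le_div_of_mapsTo_ball (hf.neg.div_const _).cexp hφ_maps hr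
  rw [hφ_deriv, norm_mul, hφ_norm, neg_div, div_self hx.ne', norm_div, norm_neg,
    Complex.norm_of_nonneg hx.le, Real.exp_neg, inv_mul_eq_div,
    div_le_iff₀ (Real.exp_pos 1), div_le_iff₀ hx] at hφ_le_div
  exact hφ_le_div.trans_eq (by ring)

lemma exists_differentiableOn_eqOn_exp {g : ℂ → ℂ} (hg : DifferentiableOn ℂ g (ball c r))
    (hne : ∀ z ∈ ball c r, g z ≠ 0) :
    ∃ h : ℂ → ℂ, DifferentiableOn ℂ h (ball c r) ∧ Set.EqOn g (Complex.exp ∘ h) (ball c r) := by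
  obtain hr | hr := le_or_gt r 0
  · exact ⟨g, hg, fun z hz ↦ by simp [ball_eq_empty.2 hr] at hz⟩
  have hc : c ∈ ball c r := mem_ball_self hr
  obtain ⟨h, hhc, hh⟩ :=
    ((hg.deriv isOpen_ball).div hg hne).isExactOn_ball.with_val_at c (Complex.log (g c))
  have hquot (z) (hz : z ∈ ball c r) : HasDerivAt (fun z ↦ g z * Complex.exp (-h z)) 0 z := by
    refine ((hg.differentiableAt (isOpen_ball.mem_nhds hz)).hasDerivAt.mul
      (hh z hz).neg.cexp).congr_deriv ?_
    simp only [Pi.neg_apply, Pi.div_apply]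
    field_simp [hne z hz]
    ring
  refine ⟨h, fun z hz ↦ (hh z hz).differentiableAt.differentiableWithinAt, fun z hz ↦ ?_⟩
  have hconst := isOpen_ball.is_const_of_deriv_eq_zero (convex_ball c r).isPreconnected
    (fun z hz ↦ (hquot z hz).differentiableAt.differentiableWithinAt)
    (fun z hz ↦ (hquot z hz).deriv) hz hc
  simp only [hhc, Complex.exp_neg, Complex.exp_log (hne c hc), mul_inv_cancel₀ (hne c hc)] at hconst
  exact (mul_inv_eq_one₀ (Complex.exp_ne_zero _)).1 hconst

lemma norm_deriv_le_of_one_lt_norm {g : ℂ → ℂ} (hr : 0 < r) (hg : DifferentiableOn ℂ g (ball c r))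
    (hlt : ∀ z ∈ ball c r, 1 < ‖g z‖) :
    ‖deriv g c‖ ≤ 2 * Real.exp 1 * (‖g c‖ * Real.log ‖g c‖) / r := by
  obtain ⟨h, hh, hgh⟩ := exists_differentiableOn_eqOn_exp hg
    fun z hz ↦ norm_pos_iff.1 (one_pos.trans (hlt z hz))
  have hre {z} (hz : z ∈ ball c r) : (h z).re = Real.log ‖g z‖ := by
    rw [hgh hz, Function.comp_apply, Complex.norm_exp, Real.log_exp]
  have hc : c ∈ ball c r := mem_ball_self hr
  have hderiv : deriv g c = g c * deriv h c := by
    rw [(hgh.eventuallyEq_of_mem (ball_mem_nhds c hr)).deriv_eq, hgh hc]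
    exact (hh.differentiableAt (ball_mem_nhds c hr)).hasDerivAt.cexp.deriv
  have hlog := norm_deriv_le_of_re_pos hr hh fun z hz ↦ (hre hz).symm ▸ Real.log_pos (hlt z hz)
  rw [hre hc] at hlog
  calc ‖deriv g c‖ = ‖g c‖ * ‖deriv h c‖ := by rw [hderiv, norm_mul]
    _ ≤ ‖g c‖ * (2 * Real.exp 1 * Real.log ‖g c‖ / r) := by gcongr
    _ = 2 * Real.exp 1 * (‖g c‖ * Real.log ‖g c‖) / r := by ring

end Logarithm

section PolynomialGrowth

open Asymptotics Bornology

lemma exists_norm_eval_le_rpow {R : Type*} [NormedRing R] [NormOneClass R] (P : R[X]) :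
    ∃ C, 0 ≤ C ∧ ∀ w, ‖P.eval w‖ ≤ C * (1 + ‖w‖ ^ 2) ^ (P.natDegree / 2 : ℝ) := by
  refine ⟨∑ i ∈ Finset.range (P.natDegree + 1), ‖P.coeff i‖, by positivity, fun w ↦ ?_⟩
  rw [eval_eq_sum_range, Finset.sum_mul]
  refine norm_sum_le_of_le _ fun i hi ↦ (norm_mul_le _ _).trans ?_
  gcongr
  calc ‖w ^ i‖ ≤ ‖w‖ ^ i := norm_pow_le w i
    _ ≤ √(1 + ‖w‖ ^ 2) ^ i := by gcongr; exact Real.le_sqrt_of_sq_le (by simp)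
    _ ≤ √(1 + ‖w‖ ^ 2) ^ P.natDegree :=
      pow_le_pow_right₀ (Real.one_le_sqrt.2 (by simp)) (Finset.mem_range_succ_iff.1 hi)
    _ = (1 + ‖w‖ ^ 2) ^ (P.natDegree / 2 : ℝ) := by
      rw [Real.sqrt_eq_rpow, ← Real.rpow_mul_natCast (by positivity)]
      ring_nf

lemma isLittleO_rpow_mul_log_sq_eval {K : Type*} [NormedField K] {P : K[X]} {β : ℝ} (hβ : 0 ≤ β)
    (hd : 2 * β + 2 < P.natDegree) :
    (fun w : K ↦ (1 + ‖w‖ ^ 2) ^ β * (‖w‖ * Real.log ‖w‖) ^ 2) =o[cobounded K] P.eval := by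
  have hP : P ≠ 0 := by
    rintro rfl
    rw [natDegree_zero, Nat.cast_zero] at hd
    linarith
  set ε : ℝ := P.natDegree / 2 - β - 1
  have hε : 0 < ε := by simp only [ε]; linarith
  have hone : ∀ᶠ x : ℝ in atTop, 1 ≤ x := eventually_ge_atTop 1
  have hrpow : (fun x : ℝ ↦ (1 + x ^ 2) ^ β) =O[atTop] fun x ↦ (x ^ β) ^ 2 := by
    refine .of_bound (2 ^ β) (hone.mono fun x hx ↦ ?_)
    rw [Real.norm_of_nonneg (by positivity), Real.norm_of_nonneg (by positivity),
      Real.rpow_pow_comm (by positivity), ← Real.mul_rpow (by positivity) (by positivity)]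
    gcongr
    nlinarith
  have hlog : (fun x : ℝ ↦ (x * Real.log x) ^ 2) =o[atTop] fun x ↦ (x * x ^ ε) ^ 2 :=
    ((isBigO_refl _ _).mul_isLittleO (isLittleO_log_rpow_atTop hε)).pow two_pos
  have hprod : (fun x : ℝ ↦ (x ^ β) ^ 2 * (x * x ^ ε) ^ 2) =ᶠ[atTop] fun x ↦ x ^ P.natDegree :=
    hone.mono fun x hx ↦ by
      have hx : 0 < x := one_pos.trans_le hx
      have : x ^ β * (x * x ^ ε) = x ^ (P.natDegree / 2 : ℝ) := by
        rw [← Real.rpow_one_add' hx.le (by positivity), ← Real.rpow_add hx]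
        simp only [ε]
        ring_nf
      beta_reduce
      rw [← mul_pow, this, ← Real.rpow_mul_natCast hx.le, Nat.cast_ofNat,
        div_mul_cancel₀ _ two_ne_zero, Real.rpow_natCast]
  have hpow : (fun w : K ↦ ‖w‖ ^ P.natDegree) =O[cobounded K] P.eval :=
    (((isBigO_refl (fun w : K ↦ w ^ P.natDegree) _).const_mul_right
      (leadingCoeff_ne_zero.2 hP)).trans
        P.isEquivalent_cobounded_leading_monomial.isBigO_symm).norm_left.congr_left
          fun w ↦ norm_pow w _
  exact (((hrpow.mul_isLittleO hlog).trans_eventuallyEq hprod).comp_tendsto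
    tendsto_norm_cobounded_atTop).trans_isBigO hpow

lemma exists_pos_le_norm_eval_add_norm_eval_derivative {K : Type*} [NormedField K] {P : K[X]}
    (hP : P.Separable) {s : Set K} (hs : IsCompact s) :
    ∃ η > 0, ∀ w ∈ s, η ≤ ‖P.eval w‖ + ‖P.derivative.eval w‖ := by
  refine hs.exists_forall_le' (by fun_prop) fun w _ ↦ ?_
  by_cases hw : P.eval w = 0
  · have := hP.eval₂_derivative_ne_zero (RingHom.id K) hw
    positivity
  · positivity

end PolynomialGrowth

section Lipschitz

lemma abs_one_add_norm_sq_rpow_sub_le {E F : Type*} [NormedAddCommGroup E] [NormedSpace ℝ E]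
    [NormedAddCommGroup F] [InnerProductSpace ℝ F] {s : Set E} {f : E → F} {f' : E → E →L[ℝ] F}
    {α D : ℝ} (hs : Convex ℝ s) (hf : ∀ x ∈ s, HasFDerivWithinAt f (f' x) s x) (hα : 0 ≤ α)
    (hD : ∀ x ∈ s, ‖f' x‖ ≤ D * (1 + ‖f x‖ ^ 2) ^ (1 / 2 + α)) {x y : E} (hx : x ∈ s)
    (hy : y ∈ s) :
    |(1 + ‖f y‖ ^ 2) ^ (-α) - (1 + ‖f x‖ ^ 2) ^ (-α)| ≤ 2 * α * D * ‖y - x‖ := by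
  have hpos (z) : 0 < 1 + ‖f z‖ ^ 2 := by positivity
  refine hs.norm_image_sub_le_of_norm_hasFDerivWithin_le (fun z hz ↦
    ((hf z hz).norm_sq.const_add 1).rpow_const (.inl (hpos z).ne')) (fun z hz ↦ ?_) hx hy
  have hsqrt : ‖f z‖ ≤ (1 + ‖f z‖ ^ 2) ^ (1 / 2 : ℝ) := by
    rw [← Real.sqrt_eq_rpow]
    exact Real.le_sqrt_of_sq_le (by simp)
  have hinner : ‖2 • (innerSL ℝ (f z)).comp (f' z)‖ ≤
      2 * ((1 + ‖f z‖ ^ 2) ^ (1 / 2 : ℝ) * (D * (1 + ‖f z‖ ^ 2) ^ (1 / 2 + α))) := by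
    rw [← Nat.cast_smul_eq_nsmul ℝ, norm_smul, Nat.cast_ofNat, Real.norm_ofNat]
    gcongr
    refine (ContinuousLinearMap.opNorm_comp_le _ _).trans ?_
    rw [innerSL_apply_norm]
    exact mul_le_mul hsqrt (hD z hz) (norm_nonneg _) (by positivity)
  have hrpow : (1 + ‖f z‖ ^ 2) ^ (-α - 1) * ((1 + ‖f z‖ ^ 2) ^ (1 / 2 : ℝ) *
      (1 + ‖f z‖ ^ 2) ^ (1 / 2 + α)) = 1 := by
    rw [← Real.rpow_add (hpos z), ← Real.rpow_add (hpos z)]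
    ring_nf
    exact Real.rpow_zero _
  calc ‖(-α * (1 + ‖f z‖ ^ 2) ^ (-α - 1)) • 2 • (innerSL ℝ (f z)).comp (f' z)‖
      = α * (1 + ‖f z‖ ^ 2) ^ (-α - 1) * ‖2 • (innerSL ℝ (f z)).comp (f' z)‖ := by
        rw [norm_smul, neg_mul, norm_neg, Real.norm_of_nonneg (by positivity)]
    _ ≤ α * (1 + ‖f z‖ ^ 2) ^ (-α - 1) *
          (2 * ((1 + ‖f z‖ ^ 2) ^ (1 / 2 : ℝ) * (D * (1 + ‖f z‖ ^ 2) ^ (1 / 2 + α)))) := by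
        gcongr
    _ = 2 * α * D := by linear_combination 2 * α * D * hrpow

end Lipschitz

/-- `F dz²` is the pullback of the quadratic differential `dw² / P(w)` by a nonconstant entire
function `g`, which forces `g` to ramify over the simple zeros of `P`. The equation
`F dz² = g'² dz² / P(g)` is written without the quotient. -/
structure IsPullbackDifferential (P : ℂ[X]) (g F : ℂ → ℂ) : Prop where
  differentiable_map : Differentiable ℂ g
  differentiable_coeff : Differentiable ℂ F
  deriv_ne_zero : deriv g ≠ 0
  sq_deriv (z : ℂ) : deriv g z ^ 2 = F z * P.eval (g z)

/-- The density of the metric `|F dz²| * (1 + |g|²) ^ β` with respect to `|dz²|`. It is the square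
of a conformal factor, so it scales by `‖ρ‖ ^ 2` under `z ↦ z₀ + ρ * z`. -/
noncomputable def metricDensity (β : ℝ) (g F : ℂ → ℂ) (z : ℂ) : ℝ :=
  ‖F z‖ * (1 + ‖g z‖ ^ 2) ^ β

lemma metricDensity_nonneg {β : ℝ} {g F : ℂ → ℂ} {z : ℂ} : 0 ≤ metricDensity β g F z := by
  unfold metricDensity
  positivity

lemma metricDensity_comp_affine (β : ℝ) (g F : ℂ → ℂ) (z₀ ρ z : ℂ) :
    metricDensity β (fun z ↦ g (z₀ + ρ * z)) (fun z ↦ ρ ^ 2 * F (z₀ + ρ * z)) z =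
      ‖ρ‖ ^ 2 * metricDensity β g F (z₀ + ρ * z) := by
  simp only [metricDensity, norm_mul, norm_pow, mul_assoc]

lemma norm_le_metricDensity {β : ℝ} (hβ : 0 ≤ β) {g F : ℂ → ℂ} {z : ℂ} :
    ‖F z‖ ≤ metricDensity β g F z :=
  le_mul_of_one_le_right (norm_nonneg _) (Real.one_le_rpow (by simp) hβ)

lemma norm_le_rpow_of_metricDensity_le {β k M : ℝ} (hβ : 0 < β) (hk : 0 < k) {g F : ℂ → ℂ} {z : ℂ}
    (hkF : k ≤ ‖F z‖) (hdens : metricDensity β g F z ≤ M) : ‖g z‖ ≤ (M / k) ^ β⁻¹ := by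
  have hpow : (1 + ‖g z‖ ^ 2) ^ β ≤ M / k := by
    rw [le_div_iff₀' hk]
    exact (mul_le_mul_of_nonneg_right hkF (by positivity)).trans hdens
  calc ‖g z‖ ≤ 1 + ‖g z‖ ^ 2 := by nlinarith [sq_nonneg (‖g z‖ - 1)]
    _ ≤ (M / k) ^ β⁻¹ :=
        (Real.le_rpow_inv_iff_of_pos (by positivity) (le_trans (by positivity) hpow) hβ).2 hpow

lemma exists_isPullbackDifferential {P : ℂ[X]} (hP : P.Separable) {g : ℂ → ℂ}
    (hg : Differentiable ℂ g) (hg' : deriv g ≠ 0) (hram : ∀ z, P.IsRoot (g z) → deriv g z = 0) :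
    ∃ F, IsPullbackDifferential P g F := by
  have hg_an (z) : AnalyticAt ℂ g z := hg.analyticAt z
  have hsq : AnalyticOnNhd ℂ (deriv g ^ 2) Set.univ := fun z _ ↦ (hg_an z).deriv.pow 2
  have hle (z) := analyticOrderAt_eval_comp_le_sq_deriv (hg_an z) hP (hram z)
  have htop (z) : analyticOrderAt (fun w ↦ P.eval (g w)) z ≠ ⊤ := fun h ↦ by
    have hz : deriv g ^ 2 =ᶠ[𝓝 z] 0 := analyticOrderAt_eq_top.1 (top_le_iff.1 (h ▸ hle z))
    exact hg' (pow_eq_zero_iff two_ne_zero |>.1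
      (hsq.eq_of_eventuallyEq (fun _ _ ↦ analyticAt_const) hz))
  obtain ⟨F, hF, hgF⟩ := exists_analyticOnNhd_eq_mul_of_analyticOrderAt_le hsq
    (fun z _ ↦ (hg_an z).aeval_polynomial P) htop hle
  exact ⟨F, hg, fun z ↦ (hF z trivial).differentiableAt, hg', congrFun hgF⟩

namespace IsPullbackDifferential

open Metric Bornology

variable {P : ℂ[X]} {g F : ℂ → ℂ} {β : ℝ}

lemma comp_affine (h : IsPullbackDifferential P g F) (z₀ : ℂ) {ρ : ℂ} (hρ : ρ ≠ 0) :
    IsPullbackDifferential P (fun z ↦ g (z₀ + ρ * z)) (fun z ↦ ρ ^ 2 * F (z₀ + ρ * z)) := by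
  have hderiv (z) : deriv (fun z ↦ g (z₀ + ρ * z)) z = ρ * deriv g (z₀ + ρ * z) := by
    rw [deriv_comp_mul_left ρ (fun z ↦ g (z₀ + z)), deriv_comp_const_add, smul_eq_mul]
  refine ⟨h.differentiable_map.comp (by fun_prop),
    (h.differentiable_coeff.comp (by fun_prop)).const_mul _, fun h0 ↦ h.deriv_ne_zero ?_,
    fun z ↦ ?_⟩
  · funext w
    have := congrFun h0 ((w - z₀) / ρ)
    simpa [hderiv, hρ, mul_div_cancel₀] using this
  · rw [hderiv, mul_pow, h.sq_deriv, mul_assoc]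

lemma two_mul_deriv_deriv_mul (h : IsPullbackDifferential P g F) (z : ℂ) :
    2 * deriv (deriv g) z * F z = deriv F z * deriv g z + F z ^ 2 * P.derivative.eval (g z) := by
  have hg := h.differentiable_map
  have hF := h.differentiable_coeff
  have hg' : Differentiable ℂ (deriv g) := hg.deriv
  have hderiv (w) : 2 * deriv g w * deriv (deriv g) w =
      deriv F w * P.eval (g w) + F w * (P.derivative.eval (g w) * deriv g w) := by
    have hsq : HasDerivAt (fun w ↦ deriv g w ^ 2) (2 * deriv g w * deriv (deriv g) w) w := by
      simpa using (hg' w).hasDerivAt.fun_pow 2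
    refine hsq.unique ?_
    rw [funext h.sq_deriv]
    exact (hF w).hasDerivAt.fun_mul ((P.hasDerivAt (g w)).comp w (hg w).hasDerivAt)
  set E : ℂ → ℂ := fun w ↦ 2 * deriv (deriv g) w * F w -
    (deriv F w * deriv g w + F w ^ 2 * P.derivative.eval (g w))
  have hE : Differentiable ℂ E := by
    have := hg'.deriv
    have := hF.deriv
    have : Differentiable ℂ fun w ↦ P.derivative.eval (g w) := P.derivative.differentiable.comp hg
    fun_prop
  have hmul : deriv g * E = 0 := funext fun w ↦ by
    simp only [E, Pi.mul_apply, Pi.zero_apply]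
    linear_combination F w * hderiv w - deriv F w * h.sq_deriv w
  have := (AnalyticOnNhd.eq_zero_or_eq_zero_of_mul_eq_zero (U := Set.univ)
    (fun w _ ↦ hg'.analyticAt w) (fun w _ ↦ hE.analyticAt w)
    (fun w _ ↦ congrFun hmul w) isPreconnected_univ).resolve_left
    fun h0 ↦ h.deriv_ne_zero (funext fun w ↦ h0 w trivial)
  exact sub_eq_zero.1 (this z trivial)

lemma continuous_metricDensity (h : IsPullbackDifferential P g F) :
    Continuous (metricDensity β g F) := by
  have hg := h.differentiable_map.continuous
  have hS : Continuous fun z ↦ 1 + ‖g z‖ ^ 2 := by fun_prop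
  exact h.differentiable_coeff.continuous.norm.mul
    (hS.rpow_const fun z ↦ .inl (by positivity : 1 + ‖g z‖ ^ 2 ≠ 0))

lemma exists_metricDensity_pos (h : IsPullbackDifferential P g F) (β : ℝ) :
    ∃ z, 0 < metricDensity β g F z := by
  obtain ⟨z, hz⟩ := Function.ne_iff.1 h.deriv_ne_zero
  have hFz : F z ≠ 0 := fun h0 ↦ hz (by simpa [h0] using h.sq_deriv z)
  exact ⟨z, by unfold metricDensity; positivity⟩

lemma exists_normalized (h : IsPullbackDifferential P g F) (β : ℝ) {N : ℝ} (hN : 0 < N) :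
    ∃ G Φ, IsPullbackDifferential P G Φ ∧ metricDensity β G Φ 0 = 1 ∧
      ∀ z ∈ closedBall 0 N, metricDensity β G Φ z ≤ 4 := by
  set μ : ℂ → ℝ := fun z ↦ √(metricDensity β g F z)
  have hμ_sq (z) : metricDensity β g F z = μ z ^ 2 := (Real.sq_sqrt metricDensity_nonneg).symm
  obtain ⟨z₁, hz₁⟩ := h.exists_metricDensity_pos β
  have hz₁ : 0 < μ z₁ := Real.sqrt_pos.2 hz₁
  obtain ⟨ε, hε, z₀, -, -, hle, hmax⟩ := hofer z₁ (N / μ z₁) (by positivity)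
    h.continuous_metricDensity.sqrt fun _ ↦ Real.sqrt_nonneg _
  rw [div_mul_cancel₀ _ hz₁.ne'] at hle
  have hz₀ : 0 < μ z₀ := pos_of_mul_pos_right (hN.trans_le hle) hε.le
  set ρ : ℂ := (μ z₀ : ℂ)⁻¹
  have hρ : ‖ρ‖ = (μ z₀)⁻¹ := by rw [norm_inv, Complex.norm_of_nonneg hz₀.le]
  refine ⟨_, _, h.comp_affine z₀ (norm_pos_iff.1 (hρ ▸ inv_pos.2 hz₀)), ?_, fun z hz ↦ ?_⟩
  · rw [metricDensity_comp_affine, mul_zero, add_zero, hμ_sq, hρ, ← mul_pow,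
      inv_mul_cancel₀ hz₀.ne', one_pow]
  · have hdist : dist z₀ (z₀ + ρ * z) ≤ ε := by
      rw [dist_self_add_right, norm_mul, hρ, inv_mul_le_iff₀ hz₀, mul_comm]
      exact (mem_closedBall_zero_iff.1 hz).trans hle
    calc metricDensity β _ _ z = ((μ z₀)⁻¹ * μ (z₀ + ρ * z)) ^ 2 := by
          rw [metricDensity_comp_affine, hμ_sq, hρ, mul_pow]
      _ ≤ ((μ z₀)⁻¹ * (2 * μ z₀)) ^ 2 := by gcongr; exact hmax _ hdist
      _ = 4 := by field_simp; norm_num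

lemma norm_deriv_sq (h : IsPullbackDifferential P g F) (z : ℂ) :
    ‖deriv g z‖ ^ 2 = ‖F z‖ * ‖P.eval (g z)‖ := by
  rw [← norm_pow, h.sq_deriv, norm_mul]

lemma exists_norm_deriv_le (P : ℂ[X]) (β : ℝ) :
    ∃ D, 0 ≤ D ∧ ∀ g F, IsPullbackDifferential P g F → ∀ z, metricDensity β g F z ≤ 4 →
      ‖deriv g z‖ ≤ D * (1 + ‖g z‖ ^ 2) ^ ((P.natDegree / 2 - β) / 2) := by
  obtain ⟨C, hC, hPC⟩ := exists_norm_eval_le_rpow P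
  refine ⟨√(4 * C), Real.sqrt_nonneg _, fun g F h z hz ↦ ?_⟩
  have hS : 0 < 1 + ‖g z‖ ^ 2 := by positivity
  refine le_of_sq_le_sq ?_ (by positivity)
  calc ‖deriv g z‖ ^ 2 = ‖F z‖ * ‖P.eval (g z)‖ := h.norm_deriv_sq z
    _ ≤ ‖F z‖ * (C * (1 + ‖g z‖ ^ 2) ^ (P.natDegree / 2 : ℝ)) := by grw [hPC]
    _ = metricDensity β g F z * C * (1 + ‖g z‖ ^ 2) ^ (P.natDegree / 2 - β) := by
        rw [Real.rpow_sub hS, metricDensity]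
        field_simp
    _ ≤ 4 * C * (1 + ‖g z‖ ^ 2) ^ (P.natDegree / 2 - β) := by gcongr
    _ = (√(4 * C) * (1 + ‖g z‖ ^ 2) ^ ((P.natDegree / 2 - β) / 2)) ^ 2 := by
        rw [mul_pow, Real.sq_sqrt (by positivity), ← Real.rpow_mul_natCast hS.le]
        ring_nf

lemma exists_forall_one_lt_norm (hd : 2 * β + 2 < P.natDegree) :
    ∃ r > 0, ∃ L, ∀ g F, IsPullbackDifferential P g F →
      (∀ z ∈ ball 0 1, metricDensity β g F z ≤ 4) → L ≤ ‖g 0‖ → ∀ z ∈ ball 0 r, 1 < ‖g z‖ := by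
  obtain ⟨D, hD, hderiv⟩ := exists_norm_deriv_le P β
  set α : ℝ := (P.natDegree / 2 - β) / 2 - 1 / 2
  have hα : 0 < α := by simp only [α]; linarith
  have hlim : Tendsto (fun w : ℂ ↦ (1 + ‖w‖ ^ 2) ^ (-α)) (cobounded ℂ) (𝓝 0) :=
    (tendsto_rpow_neg_atTop hα).comp (tendsto_atTop_add_const_left _ _
      ((tendsto_pow_atTop two_ne_zero).comp tendsto_norm_cobounded_atTop))
  have hδ : (0 : ℝ) < 2 ^ (-α) / 2 := by positivity
  obtain ⟨r, hr, hr1, hrD⟩ : ∃ r > 0, r ≤ 1 ∧ 2 * α * D * r ≤ 2 ^ (-α) / 2 := by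
    have hsmall : ∀ᶠ r in 𝓝 (0 : ℝ), r ≤ 1 ∧ 2 * α * D * r ≤ 2 ^ (-α) / 2 :=
      (eventually_le_nhds one_pos).and
        ((by fun_prop : Continuous fun r ↦ 2 * α * D * r).tendsto' 0 0 (by simp)
          |>.eventually_le_const hδ)
    have hpos : ∀ᶠ r in 𝓝[>] (0 : ℝ), r > 0 := eventually_mem_nhdsWithin
    exact (hpos.and (hsmall.filter_mono nhdsWithin_le_nhds)).exists
  obtain ⟨L, -, hL⟩ := hasBasis_cobounded_norm.eventually_iff.1 (hlim.eventually_lt_const hδ)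
  refine ⟨r, hr, L, fun g F h hdens hgL z hz ↦ ?_⟩
  have hzero : (1 + ‖g 0‖ ^ 2) ^ (-α) < 2 ^ (-α) / 2 := hL hgL
  have hlip := abs_one_add_norm_sq_rpow_sub_le (convex_ball 0 1)
    (fun z _ ↦ (h.differentiable_map z).hasDerivAt.hasFDerivAt.restrictScalars ℝ
      |>.hasFDerivWithinAt)
    hα.le (D := D) (fun z hz ↦ ?_) (mem_ball_self one_pos) (ball_subset_ball hr1 hz)
  · have hlt : (1 + ‖g z‖ ^ 2) ^ (-α) < 2 ^ (-α) := by
      have : 2 * α * D * ‖z - 0‖ ≤ 2 * α * D * r := by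
        gcongr
        simpa using (mem_ball_zero_iff.1 hz).le
      linarith [le_abs_self ((1 + ‖g z‖ ^ 2) ^ (-α) - (1 + ‖g 0‖ ^ 2) ^ (-α))]
    rw [Real.rpow_lt_rpow_iff_of_neg (by positivity) two_pos (neg_lt_zero.2 hα)] at hlt
    exact (one_lt_sq_iff₀ (norm_nonneg _)).1 (by linarith)
  · simpa [α, ContinuousLinearMap.norm_restrictScalars] using hderiv g F h z (hdens z hz)

lemma exists_norm_apply_zero_lt (hβ : 0 < β) (hd : 2 * β + 2 < P.natDegree) :
    ∃ L, ∀ g F, IsPullbackDifferential P g F → metricDensity β g F 0 = 1 →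
      (∀ z ∈ ball 0 1, metricDensity β g F z ≤ 4) → ‖g 0‖ < L := by
  obtain ⟨r, hr, L₁, hlarge⟩ := exists_forall_one_lt_norm hd
  set K : ℝ := 2 * Real.exp 1 / r
  obtain ⟨L, -, hL⟩ := hasBasis_cobounded_norm.eventually_iff.1
    (((isLittleO_rpow_mul_log_sq_eval hβ.le hd).def (c := (K ^ 2 + 1)⁻¹) (by positivity)).and
      (eventually_cobounded_le_norm L₁))
  refine ⟨L, fun g F h h0 hdens ↦ ?_⟩
  by_contra! hgL
  obtain ⟨hpoly, hgL₁⟩ := hL hgL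
  have hlarge := hlarge g F h hdens hgL₁
  have hlt : 1 < ‖g 0‖ := hlarge 0 (mem_ball_self hr)
  have hlog := Real.log_pos hlt
  set T : ℝ := (1 + ‖g 0‖ ^ 2) ^ β * (‖g 0‖ * Real.log ‖g 0‖) ^ 2
  have hT : 0 < T := by positivity
  have hlower : (K ^ 2 + 1) * T ≤ ‖P.eval (g 0)‖ := by
    rwa [Real.norm_of_nonneg hT.le, le_inv_mul_iff₀ (by positivity)] at hpoly
  have hupper : ‖P.eval (g 0)‖ ≤ K ^ 2 * T :=
    calc ‖P.eval (g 0)‖ = metricDensity β g F 0 * ‖P.eval (g 0)‖ := by rw [h0, one_mul]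
      _ = (1 + ‖g 0‖ ^ 2) ^ β * ‖deriv g 0‖ ^ 2 := by
        rw [h.norm_deriv_sq, metricDensity]
        ring
      _ ≤ (1 + ‖g 0‖ ^ 2) ^ β * (2 * Real.exp 1 * (‖g 0‖ * Real.log ‖g 0‖) / r) ^ 2 := by
        gcongr
        exact norm_deriv_le_of_one_lt_norm hr h.differentiable_map.differentiableOn hlarge
      _ = K ^ 2 * T := by ring
  linarith

lemma half_le_norm_coeff (h : IsPullbackDifferential P g F) (hβ : 0 ≤ β) {k N : ℝ} (hN : 0 < N)
    (h0 : metricDensity β g F 0 = 1) (hdens : ∀ z ∈ closedBall 0 N, metricDensity β g F z ≤ 4)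
    (hk : k ≤ ‖F 0‖) {z : ℂ} (hz : ‖z‖ ≤ k * N / 16) : k / 2 ≤ ‖F z‖ := by
  have hF_le {w} (hw : w ∈ closedBall 0 N) : ‖F w‖ ≤ 4 :=
    (norm_le_metricDensity hβ).trans (hdens w hw)
  have hmaps : Set.MapsTo F (ball 0 N) (closedBall (F 0) 8) := fun w hw ↦ by
    rw [mem_closedBall]
    linarith [dist_le_norm_add_norm (F w) (F 0), hF_le (ball_subset_closedBall hw),
      hF_le (mem_closedBall_self hN.le)]
  have hzN : z ∈ ball 0 N := by
    rw [mem_ball_zero_iff]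
    nlinarith [(norm_le_metricDensity hβ).trans_eq h0]
  have hdist : ‖F z - F 0‖ ≤ k / 2 :=
    calc ‖F z - F 0‖ ≤ 8 / N * ‖z‖ := by
          simpa [dist_eq_norm] using Complex.dist_le_div_mul_dist_of_mapsTo_ball
            h.differentiable_coeff.differentiableOn hmaps hzN
      _ ≤ 8 / N * (k * N / 16) := by gcongr
      _ = k / 2 := by field_simp; ring
  linarith [norm_sub_norm_le (F 0) (F z), norm_sub_rev (F z) (F 0)]

lemma norm_eval_le (h : IsPullbackDifferential P g F) {k : ℝ} (hk : 0 < k) {z : ℂ}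
    (hkF : k ≤ ‖F z‖) : ‖P.eval (g z)‖ ≤ ‖deriv g z‖ ^ 2 / k := by
  rw [le_div_iff₀' hk, h.norm_deriv_sq]
  gcongr

lemma norm_eval_derivative_le (h : IsPullbackDifferential P g F) {k : ℝ} (hk : 0 < k) {z : ℂ}
    (hkF : k ≤ ‖F z‖) :
    ‖P.derivative.eval (g z)‖ ≤
      (2 * ‖deriv (deriv g) z‖ * ‖F z‖ + ‖deriv F z‖ * ‖deriv g z‖) / k ^ 2 := by
  rw [le_div_iff₀' (by positivity)]
  calc k ^ 2 * ‖P.derivative.eval (g z)‖ ≤ ‖F z‖ ^ 2 * ‖P.derivative.eval (g z)‖ := by gcongr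
    _ = ‖2 * deriv (deriv g) z * F z - deriv F z * deriv g z‖ := by
      rw [h.two_mul_deriv_deriv_mul, add_sub_cancel_left, norm_mul, norm_pow]
    _ ≤ 2 * ‖deriv (deriv g) z‖ * ‖F z‖ + ‖deriv F z‖ * ‖deriv g z‖ := by
      simpa only [norm_mul, RCLike.norm_ofNat] using norm_sub_le (2 * deriv (deriv g) z * F z)
        (deriv F z * deriv g z)

lemma exists_norm_eval_add_norm_eval_derivative_le (P : ℂ[X]) (hβ : 0 < β) {k : ℝ} (hk : 0 < k) :
    ∃ A, ∀ N > 0, ∀ g F, IsPullbackDifferential P g F → metricDensity β g F 0 = 1 →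
      (∀ z ∈ closedBall 0 N, metricDensity β g F z ≤ 4) → k ≤ ‖F 0‖ →
      ‖P.eval (g 0)‖ + ‖P.derivative.eval (g 0)‖ ≤ A / N ^ 2 := by
  set B : ℝ := (4 / (k / 2)) ^ β⁻¹
  refine ⟨B ^ 2 * 16 ^ 2 / k ^ 3 + (4 * B * 16 ^ 2 / k ^ 2 + 4 * B * 16 / k) / k ^ 2,
    fun N hN g F h h0 hdens hkF ↦ ?_⟩
  have hF0 : ‖F 0‖ ≤ 1 := (norm_le_metricDensity hβ.le).trans_eq h0
  set R : ℝ := k * N / 16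
  have hR : 0 < R := by positivity
  have hg_le (z) (hz : z ∈ sphere 0 R) : ‖g z‖ ≤ B := by
    have hzR : ‖z‖ = R := mem_sphere_zero_iff_norm.1 hz
    refine norm_le_rpow_of_metricDensity_le hβ (half_pos hk)
      (h.half_le_norm_coeff hβ.le hN h0 hdens hkF hzR.le) (hdens z ?_)
    rw [mem_closedBall_zero_iff, hzR]
    simp only [R]
    nlinarith
  have hg1 : ‖deriv g 0‖ ≤ B / R := Complex.norm_deriv_le_of_forall_mem_sphere_norm_le hR
    h.differentiable_map.diffContOnCl hg_le
  have hg2 : ‖deriv (deriv g) 0‖ ≤ 2 * B / R ^ 2 := by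
    simpa [iteratedDeriv_succ] using Complex.norm_iteratedDeriv_le_of_forall_mem_sphere_norm_le 2
      hR h.differentiable_map.diffContOnCl hg_le
  have hF1 : ‖deriv F 0‖ ≤ 4 / N := Complex.norm_deriv_le_of_forall_mem_sphere_norm_le hN
    h.differentiable_coeff.diffContOnCl fun z hz ↦
      (norm_le_metricDensity hβ.le).trans (hdens z (sphere_subset_closedBall hz))
  calc ‖P.eval (g 0)‖ + ‖P.derivative.eval (g 0)‖
      ≤ ‖deriv g 0‖ ^ 2 / k +
          (2 * ‖deriv (deriv g) 0‖ * ‖F 0‖ + ‖deriv F 0‖ * ‖deriv g 0‖) / k ^ 2 :=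
        add_le_add (h.norm_eval_le hk hkF) (h.norm_eval_derivative_le hk hkF)
    _ ≤ (B / R) ^ 2 / k + (2 * (2 * B / R ^ 2) * 1 + 4 / N * (B / R)) / k ^ 2 := by gcongr
    _ = _ := by
        simp only [R]
        field_simp
        ring

lemma exists_lt_norm_apply_zero (hP : P.Separable) (hβ : 0 < β) (L : ℝ) :
    ∃ N ≥ 1, ∀ g F, IsPullbackDifferential P g F → metricDensity β g F 0 = 1 →
      (∀ z ∈ closedBall 0 N, metricDensity β g F z ≤ 4) → L < ‖g 0‖ := by
  obtain ⟨η, hη, hle⟩ :=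
    exists_pos_le_norm_eval_add_norm_eval_derivative hP (isCompact_closedBall (0 : ℂ) L)
  set k : ℝ := ((1 + L ^ 2) ^ β)⁻¹
  have hk : 0 < k := by positivity
  obtain ⟨A, hA⟩ := exists_norm_eval_add_norm_eval_derivative_le P hβ hk
  have hlim : Tendsto (fun N : ℝ ↦ A / N ^ 2) atTop (𝓝 0) :=
    tendsto_const_nhds.div_atTop (tendsto_pow_atTop two_ne_zero)
  obtain ⟨N, hN, hN1⟩ := ((hlim.eventually_lt_const hη).and (eventually_ge_atTop 1)).exists
  refine ⟨N, hN1, fun g F h h0 hdens ↦ ?_⟩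
  by_contra! hgL
  have hkF : k ≤ ‖F 0‖ := by
    rw [inv_le_iff_one_le_mul₀ (by positivity)]
    calc 1 = ‖F 0‖ * (1 + ‖g 0‖ ^ 2) ^ β := h0.symm
      _ ≤ ‖F 0‖ * (1 + L ^ 2) ^ β := by gcongr
  have := hA N (by positivity) g F h h0 hdens hkF
  linarith [hle (g 0) (mem_closedBall_zero_iff.2 hgL)]

end IsPullbackDifferential

theorem not_isPullbackDifferential {P : ℂ[X]} (hP : P.Separable) (hd : 3 ≤ P.natDegree)
    {g F : ℂ → ℂ} : ¬ IsPullbackDifferential P g F := by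
  intro h
  have hβ : (0 : ℝ) < 1 / 4 := by norm_num
  have hd : 2 * (1 / 4 : ℝ) + 2 < P.natDegree := by
    have : (3 : ℝ) ≤ P.natDegree := mod_cast hd
    linarith
  obtain ⟨L, hbdd⟩ := IsPullbackDifferential.exists_norm_apply_zero_lt hβ hd
  obtain ⟨N, hN, hlarge⟩ := IsPullbackDifferential.exists_lt_norm_apply_zero hP hβ L
  obtain ⟨G, Φ, hG, h0, hdens⟩ := h.exists_normalized (1 / 4) (one_pos.trans_le hN)
  have hball : Metric.ball (0 : ℂ) 1 ⊆ Metric.closedBall 0 N :=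
    Metric.ball_subset_closedBall.trans (Metric.closedBall_subset_closedBall hN)
  exact (hlarge G Φ hG h0 hdens).asymm (hbdd G Φ hG h0 fun z hz ↦ hdens z (hball hz))

/-- Nevanlinna: a nonconstant entire function has at most two finite totally
ramified values. -/
theorem stmt11 (g : ℂ → ℂ) (hg : Differentiable ℂ g) (hnc : ¬ ∃ c : ℂ, ∀ z, g z = c) :
    ¬ ∃ a b c : ℂ, a ≠ b ∧ a ≠ c ∧ b ≠ c ∧
      (∀ w : ℂ, g w = a → deriv g w = 0) ∧
      (∀ w : ℂ, g w = b → deriv g w = 0) ∧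
      (∀ w : ℂ, g w = c → deriv g w = 0) := by
  rintro ⟨a, b, c, hab, hac, hbc, ha, hb, hc⟩
  set P : ℂ[X] := ∏ x ∈ {a, b, c}, (X - C x)
  have hP : P.Separable := separable_prod_X_sub_C_iff'.2 Function.injective_id.injOn
  have hdeg : P.natDegree = 3 := by
    rw [natDegree_finsetProd_X_sub_C_eq_card,
      Finset.card_eq_three.2 ⟨a, b, c, hab, hac, hbc, rfl⟩]
  have hram (z) (hz : P.IsRoot (g z)) : deriv g z = 0 := by
    have : g z = a ∨ g z = b ∨ g z = c := by
      simpa [P, IsRoot.def, eval_prod, Finset.prod_eq_zero_iff, sub_eq_zero] using hz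
    rcases this with h | h | h
    exacts [ha z h, hb z h, hc z h]
  have hg' : deriv g ≠ 0 := fun h ↦
    hnc ⟨g 0, fun z ↦ is_const_of_deriv_eq_zero hg (congrFun h) z 0⟩
  obtain ⟨F, hF⟩ := exists_isPullbackDifferential hP hg hg' hram
  exact not_isPullbackDifferential hP hdeg.ge hF
end
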